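/- arXiv:1602.03479 — 4 statements merged into one kernel-verified Lean document; each statement's English description precedes it below -/
import Mathlib

section
/- Let L be a finite-dimensional real Lie algebra with nondegenerate Killing form κ, and let θ : L → L be a Lie algebra involution (a Lie algebra automorphism with θ ∘ θ = id) such that the bilinear form (x, y) ↦ −κ(x, θ(y)) is positive definite (a Cartan involution). Let 𝔨 = {x ∈ L : θ(x) = x} be the fixed subalgebra. Assume the Killing form of 𝔨 is nondegenerate (the non-Hermitian case) and that rank 𝔨 = rank L (the full-rank case). Then for every regular element a of L lying in 𝔨, there exists an element b ∈ 𝔨 that is regular in L, such that L = ⁅a, L⁆ + ⁅b, L⁆ and κ(a, b) = 0; moreover the centralizers of a and of b in L are κ-orthogonal. -/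
set_option linter.unusedSectionVars false

open NormedSpace Filter Topology

section CartanOrtho

variable {E : Type*} [NormedAddCommGroup E] [InnerProductSpace ℝ E] [FiniteDimensional ℝ E]
  [CompleteSpace E]

noncomputable instance cdNormedAlgebraRat : NormedAlgebra ℚ (E →L[ℝ] E) :=
  NormedAlgebra.restrictScalars ℚ ℝ _

lemma exp_mul_exp_neg (A : E →L[ℝ] E) : exp A * exp (-A) = 1 := by
  rw [← exp_add_of_commute (Commute.neg_right (Commute.refl A))]; simp

lemma exp_neg_mul_exp (A : E →L[ℝ] E) : exp (-A) * exp A = 1 := by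
  rw [← exp_add_of_commute (Commute.neg_left (Commute.refl A))]; simp

lemma const_of_hasDerivAt_zero {F : Type*} [NormedAddCommGroup F] [NormedSpace ℝ F] {f : ℝ → F}
    (h : ∀ t, HasDerivAt f 0 t) (s t : ℝ) : f s = f t :=
  is_const_of_deriv_eq_zero (fun t => (h t).differentiableAt) (fun t => (h t).deriv) s t

lemma flow_unique (A : E →L[ℝ] E) (γ : ℝ → E) (h : ∀ s, HasDerivAt γ (A (γ s)) s) (s : ℝ) :
    γ s = exp (s • A) (γ 0) := by
  have h1 : ∀ s, HasDerivAt (fun s : ℝ => exp (s • (-A)) (γ s)) 0 s := by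
    intro s
    have := (hasDerivAt_exp_smul_const (𝕂 := ℝ) (-A) s).clm_apply (h s)
    convert this using 1
    simp
  have h2 := const_of_hasDerivAt_zero h1 s 0
  simp only [zero_smul, exp_zero, one_apply_eq_self] at h2
  rw [← h2, ← mul_apply_eq_comp, smul_neg, exp_mul_exp_neg,
    one_apply_eq_self]

/-- derivative of the transported bracket -/
lemma hasDerivAt_transport (br : E →L[ℝ] E →L[ℝ] E) (D : E →L[ℝ] E) (x y : E) (t : ℝ) :
    HasDerivAt (fun t : ℝ => exp (t • (-D)) (br (exp (t • D) x) (exp (t • D) y)))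
      (exp (t • (-D)) (-D (br (exp (t • D) x) (exp (t • D) y))
        + br (D (exp (t • D) x)) (exp (t • D) y) + br (exp (t • D) x) (D (exp (t • D) y)))) t := by
  have e1 := hasDerivAt_exp_smul_const (𝕂 := ℝ) (-D) t
  have e2 := hasDerivAt_exp_smul_const' (𝕂 := ℝ) D t
  have ex := e2.clm_apply (hasDerivAt_const t x)
  have ey := e2.clm_apply (hasDerivAt_const t y)
  have hb := ((br.hasFDerivAt).comp_hasDerivAt t ex).clm_apply ey
  refine (e1.clm_apply hb).congr_deriv ?_
  simp [add_assoc]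

lemma exp_aut_of_der (br : E →L[ℝ] E →L[ℝ] E) (D : E →L[ℝ] E)
    (hD : ∀ x y, D (br x y) = br (D x) y + br x (D y)) (x y : E) :
    exp D (br x y) = br (exp D x) (exp D y) := by
  have h1 : ∀ t, HasDerivAt (fun t : ℝ => exp (t • (-D)) (br (exp (t • D) x) (exp (t • D) y)))
      0 t := by
    intro t
    convert hasDerivAt_transport br D x y t using 1
    rw [hD]
    have : ∀ p q : E, -(p + q) + p + q = 0 := by intros; abel
    rw [this, map_zero]
  have h2 := const_of_hasDerivAt_zero h1 1 0
  simp only [zero_smul, exp_zero, one_apply_eq_self, one_smul] at h2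
  rw [← h2, ← mul_apply_eq_comp, exp_mul_exp_neg, one_apply_eq_self]

/-- small logarithms of automorphisms are derivations -/
lemma der_of_exp_aut (br : E →L[ℝ] E →L[ℝ] E) :
    ∀ᶠ D in 𝓝 (0 : E →L[ℝ] E), (∀ x y : E, (exp D : E →L[ℝ] E) (br x y) =
        br ((exp D : E →L[ℝ] E) x) ((exp D : E →L[ℝ] E) y)) →
      ∀ x y, D (br x y) = br (D x) y + br x (D y) := by
  have hc : ContinuousAt (exp : (E →L[ℝ] E) → _) 0 := exp_continuous.continuousAt
  have h1 : ∀ᶠ D in 𝓝 (0 : E →L[ℝ] E), ‖exp D - 1‖ < 1 / 10 := by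
    have := hc.eventually (Metric.ball_mem_nhds _ (show (0 : ℝ) < 1 / 10 by norm_num))
    filter_upwards [this] with D hD
    simpa [exp_zero, dist_eq_norm] using hD
  obtain ⟨r, hr, hball⟩ := Metric.eventually_nhds_iff_ball.1 h1
  filter_upwards [Metric.ball_mem_nhds _ hr] with D hD haut
  have hDr : ‖D‖ < r := by simpa using hD
  have hsm : ∀ t ∈ Set.Icc (0 : ℝ) 1, ‖exp (t • D) - 1‖ ≤ 1 / 10 ∧ ‖exp (t • (-D)) - 1‖ ≤ 1 / 10 := by
    intro t ht
    have : ‖t • D‖ < r := by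
      rw [norm_smul, Real.norm_of_nonneg ht.1]
      exact lt_of_le_of_lt (mul_le_of_le_one_left (norm_nonneg _) ht.2) hDr
    exact ⟨(hball _ (by simpa using this)).le, (hball _ (by simpa using this)).le⟩
  let w : E →L[ℝ] E →L[ℝ] E := -((ContinuousLinearMap.compL ℝ E E E D) ∘L br) + br ∘L D +
    ((ContinuousLinearMap.compL ℝ E E E).flip D) ∘L br
  have hw : ∀ x y, w x y = -D (br x y) + br (D x) y + br x (D y) := by
    intro x y; simp [w]
  have key : ∀ x y, ‖w x y‖ ≤ (1 / 2 * ‖w‖) * ‖x‖ * ‖y‖ := by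
    intro x y
    have hd : ∀ t ∈ Set.Icc (0 : ℝ) 1, HasDerivWithinAt
        (fun t : ℝ => exp (t • (-D)) (br (exp (t • D) x) (exp (t • D) y)) - t • w x y)
        (exp (t • (-D)) (w (exp (t • D) x) (exp (t • D) y)) - w x y) (Set.Icc 0 1) t := by
      intro t _
      have := hasDerivAt_transport br D x y t
      rw [← hw] at this
      have h3 := this.sub ((hasDerivAt_id t).smul_const (w x y))
      simp only [one_smul] at h3
      exact h3.hasDerivWithinAt
    have hb : ∀ t ∈ Set.Ico (0 : ℝ) 1,
        ‖exp (t • (-D)) (w (exp (t • D) x) (exp (t • D) y)) - w x y‖ ≤ (1 / 2 * ‖w‖) * ‖x‖ * ‖y‖ := by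
      intro t ht
      obtain ⟨q1, q2⟩ := hsm t ⟨ht.1, ht.2.le⟩
      set Q := exp (t • D)
      set P := exp (t • (-D))
      have hq : ∀ v, ‖Q v - v‖ ≤ 1 / 10 * ‖v‖ := fun v => by
        have := (Q - 1).le_of_opNorm_le q1 v
        simpa using this
      have hp : ∀ v, ‖P v - v‖ ≤ 1 / 10 * ‖v‖ := fun v => by
        have := (P - 1).le_of_opNorm_le q2 v
        simpa using this
      have hq' : ∀ v, ‖Q v‖ ≤ 11 / 10 * ‖v‖ := fun v => by
        have := norm_add_le (Q v - v) v
        rw [sub_add_cancel] at this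
        linarith [hq v]
      have hW : ∀ p q, ‖w p q‖ ≤ ‖w‖ * ‖p‖ * ‖q‖ := w.le_opNorm₂
      have e : P (w (Q x) (Q y)) - w x y = (P (w (Q x) (Q y)) - w (Q x) (Q y)) +
          (w (Q x - x) (Q y) + w x (Q y - y)) := by
        simp only [map_sub, sub_apply]; abel
      rw [e]
      refine (norm_add_le _ _).trans ?_
      have a1 := hp (w (Q x) (Q y))
      have a2 := hW (Q x) (Q y)
      have a3 := norm_add_le (w (Q x - x) (Q y)) (w x (Q y - y))
      have a4 := hW (Q x - x) (Q y)
      have a5 := hW x (Q y - y)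
      have b0 := norm_nonneg w
      have b1 : ‖w‖ * ‖Q x‖ * ‖Q y‖ ≤ ‖w‖ * (11 / 10 * ‖x‖) * (11 / 10 * ‖y‖) := by
        gcongr; exacts [hq' x, hq' y]
      have b2 : ‖w‖ * ‖Q x - x‖ * ‖Q y‖ ≤ ‖w‖ * (1 / 10 * ‖x‖) * (11 / 10 * ‖y‖) := by
        gcongr; exacts [hq x, hq' y]
      have b3 : ‖w‖ * ‖x‖ * ‖Q y - y‖ ≤ ‖w‖ * ‖x‖ * (1 / 10 * ‖y‖) := by
        gcongr; exact hq y
      have b4 : 0 ≤ ‖w‖ * ‖x‖ * ‖y‖ := by positivity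
      nlinarith
    have := norm_image_sub_le_of_norm_deriv_le_segment_01' hd hb
    simp only [one_smul, zero_smul, exp_zero, one_apply_eq_self] at this
    rw [← haut, ← mul_apply_eq_comp, exp_neg_mul_exp] at this
    simpa using this
  have h2 := ContinuousLinearMap.opNorm_le_bound₂ w (by positivity) key
  have h5 : ‖w‖ = 0 := by linarith [norm_nonneg w]
  intro x y
  have h6 := key x y
  rw [h5] at h6
  have h4 : w x y = 0 := by
    rw [← norm_le_zero_iff]; simpa using h6
  rw [hw] at h4
  have := eq_neg_of_add_eq_zero_left ((add_assoc _ _ _).symm.trans h4)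
  rw [neg_eq_iff_eq_neg] at this
  simpa using this

/-- A real Lie algebra with Cartan involution and an abelian centralizer inside the fixed part,
written on an inner product space. -/
structure CartanData (E : Type*) [NormedAddCommGroup E] [InnerProductSpace ℝ E] where
  br : E →L[ℝ] E →L[ℝ] E
  θ : E →L[ℝ] E
  a : E
  skew : ∀ x y, br x y = - br y x
  jac : ∀ x y z, br x (br y z) = br (br x y) z + br y (br x z)
  inj : ∀ w, (∀ x, br w x = 0) → w = 0
  der : ∀ D : E →L[ℝ] E, (∀ x y, D (br x y) = br (D x) y + br x (D y)) → ∃ w, br w = D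
  θθ : ∀ x, θ (θ x) = x
  θbr : ∀ x y, θ (br x y) = br (θ x) (θ y)
  inv : ∀ z x y, θ z = z → (inner ℝ (br z x) y) = -(inner ℝ x (br z y))
  ha : θ a = a
  hK : ∀ x, br a x = 0 → θ x = x
  hab : ∀ x y, br a x = 0 → br a y = 0 → br x y = 0
  cent : ∀ v, θ v = v → (∀ x, θ x = x → br v x = 0) → v = 0

namespace CartanData

variable (C : CartanData E)

lemma br_self (x : E) : C.br x x = 0 := by
  have := C.skew x x
  have h2 : (2 : ℝ) • C.br x x = 0 := by
    rw [two_smul]; nth_rewrite 1 [this]; exact neg_add_cancel _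
  simpa using h2

/-- compact group of automorphisms commuting with the involution -/
def G : Set (E →L[ℝ] E) :=
  {g | g ∈ unitary (E →L[ℝ] E) ∧ (∀ x y, g (C.br x y) = C.br (g x) (g y)) ∧
    ∀ x, g (C.θ x) = C.θ (g x)}

variable {C}

lemma star_mul_of_mem {g : E →L[ℝ] E} (hg : g ∈ C.G) : star g * g = 1 := hg.1.1
lemma mul_star_of_mem {g : E →L[ℝ] E} (hg : g ∈ C.G) : g * star g = 1 := hg.1.2

lemma star_apply_apply {g : E →L[ℝ] E} (hg : g ∈ C.G) (x : E) : star g (g x) = x := by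
  rw [← mul_apply_eq_comp, star_mul_of_mem hg, one_apply_eq_self]

lemma apply_star_apply {g : E →L[ℝ] E} (hg : g ∈ C.G) (x : E) : g (star g x) = x := by
  rw [← mul_apply_eq_comp, mul_star_of_mem hg, one_apply_eq_self]

lemma one_mem : (1 : E →L[ℝ] E) ∈ C.G := ⟨Submonoid.one_mem _, by simp, by simp⟩

lemma mul_mem {g g' : E →L[ℝ] E} (hg : g ∈ C.G) (hg' : g' ∈ C.G) : g * g' ∈ C.G :=
  ⟨Submonoid.mul_mem _ hg.1 hg'.1, fun x y => by simp [hg.2.1, hg'.2.1],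
    fun x => by simp [hg.2.2, hg'.2.2]⟩

lemma star_mem {g : E →L[ℝ] E} (hg : g ∈ C.G) : star g ∈ C.G := by
  refine ⟨Unitary.star_mem hg.1, fun x y => ?_, fun x => ?_⟩
  · have := hg.2.1 (star g x) (star g y)
    rw [apply_star_apply hg, apply_star_apply hg] at this
    rw [← this, star_apply_apply hg]
  · have := hg.2.2 (star g x)
    rw [apply_star_apply hg] at this
    rw [← this, star_apply_apply hg]

lemma inner_map {g : E →L[ℝ] E} (hg : g ∈ C.G) (x y : E) : (inner ℝ (g x) (g y)) = (inner ℝ x y) := by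
  have := ContinuousLinearMap.adjoint_inner_left g (g y) x
  rw [← ContinuousLinearMap.adjoint_inner_right, ← ContinuousLinearMap.star_eq_adjoint,
    star_apply_apply hg]

lemma inner_star {g : E →L[ℝ] E} (x y : E) : (inner ℝ (star g x) y) = (inner ℝ x (g y)) := by
  rw [ContinuousLinearMap.star_eq_adjoint, ContinuousLinearMap.adjoint_inner_left]

lemma isClosed_G : IsClosed C.G := by
  have h1 : IsClosed ((unitary (E →L[ℝ] E) : Set (E →L[ℝ] E))) := isClosed_unitary
  have h2 : IsClosed {g : E →L[ℝ] E | ∀ x y, g (C.br x y) = C.br (g x) (g y)} := by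
    simp only [Set.ofPred_forall]
    refine isClosed_iInter fun x => isClosed_iInter fun y => isClosed_eq (by fun_prop) (by fun_prop)
  have h3 : IsClosed {g : E →L[ℝ] E | ∀ x, g (C.θ x) = C.θ (g x)} := by
    simp only [Set.ofPred_forall]
    refine isClosed_iInter fun x => isClosed_eq (by fun_prop) (by fun_prop)
  exact h1.inter (h2.inter h3)

lemma isCompact_G : IsCompact C.G := by
  refine Metric.isCompact_of_isClosed_isBounded isClosed_G ?_
  refine (Metric.isBounded_closedBall (x := (0 : E →L[ℝ] E)) (r := 1)).subset fun g hg => ?_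
  rw [mem_closedBall_zero_iff]
  refine ContinuousLinearMap.opNorm_le_bound _ zero_le_one fun x => ?_
  have := inner_map hg x x
  rw [real_inner_self_eq_norm_sq, real_inner_self_eq_norm_sq] at this
  rw [one_mul]
  exact ((sq_eq_sq₀ (norm_nonneg _) (norm_nonneg _)).1 this).le

lemma br_mem_fix {x y : E} (hx : C.θ x = x) (hy : C.θ y = y) : C.θ (C.br x y) = C.br x y := by
  rw [C.θbr, hx, hy]

lemma br_der (z x y : E) : C.br z (C.br x y) = C.br (C.br z x) y + C.br x (C.br z y) :=
  C.jac z x y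

lemma star_br {z : E} (hz : C.θ z = z) : star (C.br z) = - C.br z := by
  rw [ContinuousLinearMap.star_eq_adjoint]
  symm
  rw [ContinuousLinearMap.eq_adjoint_iff]
  intro x y
  simp [C.inv z x y hz]

lemma θ_br_comm {z : E} (hz : C.θ z = z) : Commute C.θ (C.br z) := by
  ext x
  simp [C.θbr, hz]

lemma exp_mem {z : E} (hz : C.θ z = z) : exp (C.br z) ∈ C.G := by
  refine ⟨exp_mem_unitary_of_mem_skewAdjoint ?_, exp_aut_of_der _ _ (br_der z), fun x => ?_⟩
  · rw [skewAdjoint.mem_iff, star_br hz]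
  · have := (θ_br_comm hz).exp_right
    have := congrArg (fun A : E →L[ℝ] E => A x) this.eq
    simpa using this.symm

lemma exp_smul_mem {z : E} (hz : C.θ z = z) (t : ℝ) : exp (t • C.br z) ∈ C.G := by
  rw [← map_smul]; exact exp_mem (by rw [map_smul, hz])

lemma star_exp {z : E} (hz : C.θ z = z) : star (exp (C.br z)) = exp (- C.br z) := by
  have h := star_mul_of_mem (exp_mem hz)
  calc star (exp (C.br z)) = star (exp (C.br z)) * (exp (C.br z) * exp (-C.br z)) := by
        rw [exp_mul_exp_neg, mul_one]
    _ = _ := by rw [← mul_assoc, h, one_mul]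

lemma conj_br {g : E →L[ℝ] E} (hg : g ∈ C.G) (z : E) : g * C.br z * star g = C.br (g z) := by
  ext x
  simp [hg.2.1, apply_star_apply hg]

lemma conj_exp {g : E →L[ℝ] E} (hg : g ∈ C.G) (z : E) :
    g * exp (C.br z) * star g = exp (C.br (g z)) := by
  rw [← conj_br hg]
  let u : (E →L[ℝ] E)ˣ := ⟨g, star g, mul_star_of_mem hg, star_mul_of_mem hg⟩
  exact (exp_units_conj u (C.br z)).symm

lemma exp_fix {z x : E} (h : C.br z x = 0) : exp (C.br z) x = x := by
  have := flow_unique (C.br z) (fun _ => x) (fun s => by rw [h]; exact hasDerivAt_const _ _) 1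
  simpa using this.symm

variable (C) in
/-- elements fixing a conjugate of the centralizer of `a` pointwise -/
def S : Set (E →L[ℝ] E) :=
  {g | g ∈ C.G ∧ ∃ c ∈ C.G, ∀ x, C.br C.a x = 0 → g (c x) = c x}

lemma isClosed_S : IsClosed C.S := by
  have h1 : IsCompact ((C.G ×ˢ C.G) ∩ {p : (E →L[ℝ] E) × (E →L[ℝ] E) |
      ∀ x, C.br C.a x = 0 → p.1 (p.2 x) = p.2 x}) := by
    refine (isCompact_G.prod isCompact_G).inter_right ?_
    simp only [Set.ofPred_forall]
    refine isClosed_iInter fun x => isClosed_iInter fun y => isClosed_eq ?_ (by fun_prop)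
    exact continuous_fst.clm_apply (continuous_snd.clm_apply continuous_const)
  have h2 := (h1.image continuous_fst).isClosed
  convert h2 using 1
  ext g
  simp only [S, Set.mem_ofPred_eq, Set.mem_image, Set.mem_inter_iff, Set.mem_prod, Prod.exists]
  constructor
  · rintro ⟨hg, c, hc, h⟩
    exact ⟨g, c, ⟨⟨hg, hc⟩, h⟩, rfl⟩
  · rintro ⟨g', c, ⟨⟨hg, hc⟩, h⟩, rfl⟩
    exact ⟨hg, c, hc, h⟩

lemma one_mem_S : (1 : E →L[ℝ] E) ∈ C.S := ⟨one_mem, 1, one_mem, by simp⟩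

/-- conjugacy inside the fixed algebra of `g` -/
lemma exists_conj {g c : E →L[ℝ] E} (hg : g ∈ C.G) (hc : c ∈ C.G) (hgc : g (c C.a) = c C.a)
    {x : E} (hx : C.θ x = x) (hgx : g x = x) :
    ∃ c' ∈ C.G, c' * g = g * c' ∧ C.br (c C.a) (c' x) = 0 := by
  have hM : IsCompact (C.G ∩ {c' : E →L[ℝ] E | c' * g = g * c'}) :=
    isCompact_G.inter_right (isClosed_eq (by fun_prop) (by fun_prop))
  obtain ⟨c0, ⟨hc0, hcomm⟩, hmax⟩ := hM.exists_isMaxOn ⟨1, one_mem, by simp⟩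
    (f := fun c' : E →L[ℝ] E => (inner ℝ (c' x) (c C.a))) (by fun_prop)
  refine ⟨c0, hc0, hcomm, ?_⟩
  have hcomm' : c0 * g = g * c0 := hcomm
  have hc0x : C.θ (c0 x) = c0 x := by rw [← hc0.2.2, hx]
  have hca : C.θ (c C.a) = c C.a := by rw [← hc.2.2, C.ha]
  have hgc0 : g (c0 x) = c0 x := by
    rw [← mul_apply_eq_comp, ← hcomm', mul_apply_eq_comp, hgx]
  set z := C.br (c C.a) (c0 x) with hz
  have hzK : C.θ z = z := br_mem_fix hca hc0x
  have hgz : g z = z := by rw [hz, hg.2.1, hgc, hgc0]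
  have hd : HasDerivAt (fun t : ℝ => (inner ℝ (exp (t • C.br z) (c0 x)) (c C.a)))
      (inner ℝ (C.br z (c0 x)) (c C.a)) 0 := by
    have h1 := (hasDerivAt_exp_smul_const (𝕂 := ℝ) (C.br z) 0).clm_apply
      (hasDerivAt_const (0 : ℝ) (c0 x))
    have h2 := h1.inner ℝ (hasDerivAt_const (0 : ℝ) (c C.a))
    simpa using h2
  have hloc : IsLocalMax (fun t : ℝ => (inner ℝ (exp (t • C.br z) (c0 x)) (c C.a))) 0 := by
    refine Filter.Eventually.of_forall fun t => ?_
    have hmem : exp (t • C.br z) * c0 ∈ C.G ∩ {c' : E →L[ℝ] E | c' * g = g * c'} := by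
      refine ⟨mul_mem (exp_smul_mem hzK t) hc0, ?_⟩
      have hcz : Commute g (t • C.br z) := by
        refine Commute.smul_right ?_ t
        have := conj_br hg z
        rw [hgz] at this
        change g * C.br z = C.br z * g
        conv_rhs => rw [← this, mul_assoc, star_mul_of_mem hg, mul_one]
      have := hcz.exp_right
      change exp (t • C.br z) * c0 * g = g * (exp (t • C.br z) * c0)
      rw [mul_assoc, hcomm', ← mul_assoc, ← this.eq, mul_assoc]
    have := hmax hmem
    simpa using this
  have h0 := hloc.hasDerivAt_eq_zero hd
  have h1 : (inner ℝ z z) = 0 := by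
    rw [C.skew z (c0 x), inner_neg_left, C.inv _ _ _ hc0x, neg_neg] at h0
    have : C.br (c0 x) (c C.a) = - z := by rw [hz, C.skew]
    rw [this, inner_neg_right, neg_eq_zero] at h0
    exact h0
  exact inner_self_eq_zero.1 h1

lemma hasStrictFDerivAt_three_exp {F R : Type*} [NormedAddCommGroup F] [NormedSpace ℝ F]
    [NormedRing R] [NormedAlgebra ℝ R] [CompleteSpace R] (A B D : F →L[ℝ] R) :
    HasStrictFDerivAt (fun p => exp (A p) * exp (B p) * exp (D p)) (A + B + D) 0 := by
  have hexp : ∀ A : F →L[ℝ] R, HasStrictFDerivAt (fun p => exp (A p)) A 0 := by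
    intro A
    have h1 : HasStrictFDerivAt (exp : R → R) (1 : R →L[ℝ] R) (A 0) := by
      rw [map_zero]; exact hasStrictFDerivAt_exp_zero
    exact h1.comp (0 : F) A.hasStrictFDerivAt
  refine (((hexp A).mul' (hexp B)).mul' (hexp D)).congr_fderiv ?_
  ext p
  simp only [map_zero, exp_zero, one_smul, MulOpposite.op_one]
  simp [add_comm, add_left_comm]

variable (C) in
/-- fixed subspace of the involution -/
def K : Submodule ℝ E := LinearMap.eqLocus (C.θ : E →ₗ[ℝ] E) LinearMap.id

lemma mem_K {x : E} : x ∈ C.K ↔ C.θ x = x := by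
  simp [K, LinearMap.mem_eqLocus]

variable (C) in
/-- fixed subspace of `g` in `K` -/
def m (g : E →L[ℝ] E) : Submodule ℝ E := C.K ⊓ LinearMap.eqLocus (g : E →ₗ[ℝ] E) LinearMap.id

lemma mem_m {g : E →L[ℝ] E} {x : E} : x ∈ C.m g ↔ C.θ x = x ∧ g x = x := by
  simp [m, LinearMap.mem_eqLocus, mem_K]

/-- local logarithm for the group `G` -/
lemma exists_log (C : CartanData E) : ∃ (lg : (E →L[ℝ] E) → E),
    HasStrictFDerivAt lg (fderiv ℝ lg 1) 1 ∧ (∀ z, C.θ z = z → fderiv ℝ lg 1 (C.br z) = z) ∧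
    lg 1 = 0 ∧ (∀ u, C.θ (lg u) = lg u) ∧
    ∀ᶠ u in 𝓝 (1 : E →L[ℝ] E), u ∈ C.G → exp (C.br (lg u)) = u := by
  have hs : HasStrictFDerivAt (exp : (E →L[ℝ] E) → (E →L[ℝ] E))
      ((ContinuousLinearEquiv.refl ℝ (E →L[ℝ] E) : (E →L[ℝ] E) →L[ℝ] (E →L[ℝ] E))) 0 :=
    hasStrictFDerivAt_exp_zero
  set l := hs.localInverse with hl
  have l1 : HasStrictFDerivAt l ((ContinuousLinearEquiv.refl ℝ (E →L[ℝ] E)).symm :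
      (E →L[ℝ] E) →L[ℝ] (E →L[ℝ] E)) 1 := by
    have := hs.to_localInverse
    rwa [exp_zero] at this
  have l0 : l 1 = 0 := by
    have := hs.localInverse_apply_image
    rwa [exp_zero] at this
  have hright : ∀ᶠ u in 𝓝 (1 : E →L[ℝ] E), exp (l u) = u := by
    have := hs.eventually_right_inverse
    rwa [exp_zero] at this
  have hleft : ∀ᶠ D in 𝓝 (0 : E →L[ℝ] E), l (exp D) = D := hs.eventually_left_inverse
  have lc : Tendsto l (𝓝 1) (𝓝 0) := by
    have := l1.continuousAt
    rwa [ContinuousAt, l0] at this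
  -- left inverse of `br` on `K`
  let adK : C.K →ₗ[ℝ] (E →L[ℝ] E) := (C.br : E →ₗ[ℝ] (E →L[ℝ] E)) ∘ₗ C.K.subtype
  have hker : LinearMap.ker adK = ⊥ := by
    rw [LinearMap.ker_eq_bot']
    intro z hz
    ext
    refine C.inj z fun x => ?_
    have := congrArg (fun A : E →L[ℝ] E => A x) hz
    simpa [adK] using this
  obtain ⟨π, hπ⟩ := adK.exists_leftInverse_of_injective hker
  let π' : (E →L[ℝ] E) →L[ℝ] E := LinearMap.toContinuousLinearMap (C.K.subtype ∘ₗ π)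
  have hπ' : ∀ z, C.θ z = z → π' (C.br z) = z := by
    intro z hz
    have := congrArg (fun A => ((A ⟨z, mem_K.2 hz⟩ : C.K) : E)) hπ
    simpa [adK, π'] using this
  have hd : HasStrictFDerivAt (fun u => π' (l u)) π' 1 := by
    have := π'.hasStrictFDerivAt.comp (1 : E →L[ℝ] E) l1
    exact this
  refine ⟨fun u => π' (l u), ?_, ?_, ?_, ?_, ?_⟩
  · rw [hd.hasFDerivAt.fderiv]; exact hd
  · rw [hd.hasFDerivAt.fderiv]; exact hπ'
  · simp [l0]
  · intro u
    exact mem_K.1 (π (l u)).2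
  · have hconj : Tendsto (fun D : E →L[ℝ] E => C.θ * D * C.θ) (𝓝 0) (𝓝 0) := by
      have : Continuous (fun D : E →L[ℝ] E => C.θ * D * C.θ) := by fun_prop
      simpa using this.tendsto 0
    filter_upwards [hright, lc.eventually (der_of_exp_aut C.br), lc.eventually hleft,
      lc.eventually (hconj.eventually hleft)] with u h1 h2 h3 h4 hu
    rw [h1] at h2
    obtain ⟨w, hw⟩ := C.der (l u) (h2 hu.2.1)
    have hθ1 : C.θ * C.θ = 1 := by ext x; simp [C.θθ]
    let th : (E →L[ℝ] E)ˣ := ⟨C.θ, C.θ, hθ1, hθ1⟩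
    have h5 : exp (C.θ * l u * C.θ) = C.θ * exp (l u) * C.θ := exp_units_conj th (l u)
    have h6 : C.θ * u * C.θ = u := by
      ext x
      simp [hu.2.2, C.θθ]
    rw [h5, h1, h6] at h4
    have hwK : C.θ w = w := by
      rw [← sub_eq_zero]
      refine C.inj _ fun x => ?_
      have h7 := congrArg (fun A : E →L[ℝ] E => A x) h4
      simp only [← hw, mul_apply_eq_comp, C.θbr, C.θθ] at h7
      rw [map_sub, sub_apply, ← h7, sub_self]
    rw [← hw, hπ' w hwK, hw, h1]

lemma S_open {g : E →L[ℝ] E} (hg : g ∈ C.S) :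
    ∀ᶠ z : C.K in 𝓝 0, g * exp (C.br (z : E)) ∈ C.S := by
  obtain ⟨hgG, c, hc, hfix⟩ := hg
  obtain ⟨lg, hlg, hlgbr, hlg1, hlgK, hlgexp⟩ := C.exists_log
  -- the map
  let f : C.K × C.m g → (E →L[ℝ] E) := fun p =>
    exp (C.br (star g (p.1 : E))) * exp (C.br (p.2 : E)) * exp (- C.br (p.1 : E))
  have hsK : ∀ y : C.K, C.θ (star g (y : E)) = star g (y : E) := fun y => by
    rw [← (star_mem hgG).2.2, mem_K.1 y.2]
  let i1 : C.K × C.m g →L[ℝ] E := C.K.subtypeL ∘L ContinuousLinearMap.fst ℝ C.K (C.m g)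
  let i2 : C.K × C.m g →L[ℝ] E := (C.m g).subtypeL ∘L ContinuousLinearMap.snd ℝ C.K (C.m g)
  have hf0 : f 0 = 1 := by simp [f]
  let f' : C.K × C.m g →L[ℝ] (E →L[ℝ] E) := C.br ∘L (star g) ∘L i1 + C.br ∘L i2 - C.br ∘L i1
  have hf : HasStrictFDerivAt f f' 0 := by
    have h1 := hasStrictFDerivAt_three_exp (C.br ∘L (star g) ∘L i1) (C.br ∘L i2) (-(C.br ∘L i1))
    rw [← sub_eq_add_neg] at h1
    exact h1
  have hlf : HasStrictFDerivAt (fun p => lg (f p)) (fderiv ℝ lg 1 ∘L f') 0 := by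
    have h1 : HasStrictFDerivAt lg (fderiv ℝ lg 1) (f 0) := by rw [hf0]; exact hlg
    exact h1.comp 0 hf
  have hval : ∀ p, (fderiv ℝ lg 1 ∘L f') p = star g (p.1 : E) + p.2 - p.1 := by
    intro p
    have : (fderiv ℝ lg 1 ∘L f') p =
      fderiv ℝ lg 1 (C.br (star g (p.1 : E)) + C.br (p.2 : E) - C.br (p.1 : E)) := rfl
    rw [this, map_sub, map_add, hlgbr _ (hsK _), hlgbr _ (mem_m.1 p.2.2).1, hlgbr _ (mem_K.1 p.1.2)]
  -- codomain restricted to K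
  let P : E →L[ℝ] C.K := C.K.orthogonalProjectionOnto
  have hP : ∀ (x : E) (hx : C.θ x = x), P x = ⟨x, mem_K.2 hx⟩ := by
    intro x hx
    exact Submodule.orthogonalProjectionOnto_mem_subspace_eq_self (K := C.K) ⟨x, mem_K.2 hx⟩
  let Ψ : C.K × C.m g → C.K := fun p => P (lg (f p))
  have hΨ : HasStrictFDerivAt Ψ (P ∘L (fderiv ℝ lg 1 ∘L f')) 0 :=
    P.hasStrictFDerivAt.comp (0 : C.K × C.m g) hlf
  have hΨ0 : Ψ 0 = 0 := by simp [Ψ, hf0, hlg1]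
  have hsurj : (P ∘L (fderiv ℝ lg 1 ∘L f')).range = ⊤ := by
    rw [← Submodule.orthogonal_eq_bot_iff, Submodule.eq_bot_iff]
    intro q hq
    rw [Submodule.mem_orthogonal] at hq
    have hq' : ∀ p : C.K × C.m g, (inner ℝ (star g (p.1 : E) + p.2 - p.1) ((q : E))) = 0 := by
      intro p
      have h1 := hq ((P ∘L (fderiv ℝ lg 1 ∘L f')) p) ⟨p, rfl⟩
      rw [ContinuousLinearMap.comp_apply, hval, hP] at h1
      · exact h1
      · rw [map_sub, map_add, hsK, (mem_m.1 p.2.2).1, mem_K.1 p.1.2]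
    have hgq : C.θ (g q) = g q := by rw [← hgG.2.2, mem_K.1 q.2]
    have h2 : g q = q := by
      have hmem : C.θ (g q - q) = g q - q := by rw [map_sub, hgq, mem_K.1 q.2]
      have h1 := hq' (⟨g q - q, mem_K.2 hmem⟩, 0)
      simp only [ZeroMemClass.coe_zero, add_zero] at h1
      rw [inner_sub_left, inner_star, ← inner_sub_right, inner_self_eq_zero, sub_eq_zero] at h1
      exact h1
    have h3 := hq' (0, ⟨q, mem_m.2 ⟨mem_K.1 q.2, h2⟩⟩)
    simp only [ZeroMemClass.coe_zero, map_zero, zero_add, sub_zero, inner_self_eq_zero] at h3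
    exact Subtype.ext h3
  have hmap := hΨ.map_nhds_eq_of_surj hsurj
  rw [hΨ0] at hmap
  have hgood : ∀ᶠ p in 𝓝 (0 : C.K × C.m g), f p ∈ C.G → exp (C.br (lg (f p))) = f p := by
    have := hf.continuousAt
    rw [ContinuousAt, hf0] at this
    exact this.eventually hlgexp
  have himg := Filter.image_mem_map (m := Ψ) hgood
  rw [hmap] at himg
  filter_upwards [himg] with z hz
  obtain ⟨⟨y, x⟩, hp, rfl⟩ := hz
  have hyK := mem_K.1 y.2
  obtain ⟨hxK, hgx⟩ := mem_m.1 x.2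
  have hey := exp_mem hyK
  have hfG : f (y, x) ∈ C.G := by
    refine mul_mem (mul_mem (exp_mem (hsK y)) (exp_mem hxK)) ?_
    rw [← star_exp hyK]; exact star_mem hey
  have hz2 : ((Ψ (y, x) : C.K) : E) = lg (f (y, x)) := by
    simp only [Ψ]; rw [hP _ (hlgK _)]
  rw [hz2, hp hfG]
  have hexpr : g * f (y, x) = exp (C.br (y : E)) * (g * exp (C.br (x : E))) *
      star (exp (C.br (y : E))) := by
    have h1 := conj_exp hgG (star g (y : E))
    rw [apply_star_apply hgG] at h1
    rw [star_exp hyK, ← h1]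
    simp only [f, mul_assoc]
    rw [← mul_assoc (star g) g, star_mul_of_mem hgG, one_mul]
  rw [hexpr]
  refine ⟨mul_mem (mul_mem hey (mul_mem hgG (exp_mem hxK))) (star_mem hey), ?_⟩
  obtain ⟨c', hc', hcomm, hbr⟩ := exists_conj hgG hc (hfix _ (C.br_self _)) hxK hgx
  refine ⟨exp (C.br (y : E)) * (star c' * c), mul_mem hey (mul_mem (star_mem hc') hc), ?_⟩
  intro v hv
  have h1 : C.br C.a (star c (c' x)) = 0 := by
    have := congrArg (fun w => (star c) w) hbr
    simp only [(star_mem hc).2.1, star_apply_apply hc, map_zero] at this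
    exact this
  have h2 : C.br (x : E) (star c' (c v)) = 0 := by
    have h3 := congrArg (fun w => star c' (c w)) (C.hab _ _ h1 hv)
    simp only [hc.2.1, (star_mem hc').2.1, apply_star_apply hc, star_apply_apply hc', map_zero] at h3
    exact h3
  have h4 : g (star c' (c v)) = star c' (c v) := by
    have h5 : g * star c' = star c' * g := by
      calc g * star c' = star c' * (c' * g) * star c' := by
            rw [← mul_assoc, star_mul_of_mem hc', one_mul]
        _ = star c' * g := by
            rw [hcomm, mul_assoc, mul_assoc, mul_star_of_mem hc', mul_one]
    rw [← mul_apply_eq_comp, h5, mul_apply_eq_comp, hfix v hv]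
  simp only [mul_apply_eq_comp, star_apply_apply hey]
  rw [exp_fix h2, h4]

lemma S_mul_exp {z : E} {g : E →L[ℝ] E} (hg : g ∈ C.S) (hz : C.θ z = z) :
    g * exp (C.br z) ∈ C.S := by
  let A : Set ℝ := {t | g * exp (t • C.br z) ∈ C.S}
  have hcl : IsClosed A := by
    refine isClosed_S.preimage (f := fun t : ℝ => g * exp (t • C.br z)) ?_
    exact continuous_const.mul (exp_continuous.comp (by fun_prop))
  have hop : IsOpen A := by
    rw [isOpen_iff_mem_nhds]
    intro t0 ht0
    have h1 := S_open (g := g * exp (t0 • C.br z)) ht0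
    have h2 : Tendsto (fun t : ℝ => (t - t0) • (⟨z, mem_K.2 hz⟩ : C.K)) (𝓝 t0) (𝓝 0) := by
      have : Continuous (fun t : ℝ => (t - t0) • (⟨z, mem_K.2 hz⟩ : C.K)) := by fun_prop
      simpa using this.tendsto t0
    filter_upwards [h2.eventually h1] with t ht
    change g * exp (t • C.br z) ∈ C.S
    have h3 : exp (t • C.br z) = exp (t0 • C.br z) * exp ((t - t0) • C.br z) := by
      rw [← exp_add_of_commute, ← add_smul, add_sub_cancel]
      exact ((Commute.refl _).smul_left _).smul_right _
    rw [h3, ← mul_assoc]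
    simpa using ht
  have := IsClopen.eq_univ ⟨hcl, hop⟩ ⟨0, by simpa [A] using hg⟩
  have h1 : (1 : ℝ) ∈ A := by rw [this]; trivial
  simpa [A] using h1

/-- joint eigenvectors not killed by a given element of the centralizer of `a` -/
lemma exists_joint_eigenvector {v0 : E} (hv0 : C.br C.a v0 = 0) (hne : v0 ≠ 0) :
    ∃ (u : E) (l : E → ℝ), C.θ u = u ∧ C.br v0 u ≠ 0 ∧
      ∀ p, C.br C.a p = 0 → C.br p (C.br C.a u) = l p • u := by
  by_contra hcon
  push Not at hcon
  let H := {p : E // C.br C.a p = 0}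
  let T : H → E →ₗ[ℝ] E := fun p => ((C.br p.1 * C.br C.a : E →L[ℝ] E) : E →ₗ[ℝ] E)
  have hcomm : ∀ p q x, C.br C.a p = 0 → C.br C.a q = 0 →
      C.br p (C.br q x) = C.br q (C.br p x) := by
    intro p q x hp hq
    rw [C.jac p q x, C.hab p q hp hq]; simp
  have hT : ∀ i, (T i).IsSymmetric := by
    intro p x y
    change (inner ℝ (C.br p.1 (C.br C.a x)) y) = (inner ℝ x (C.br p.1 (C.br C.a y)))
    rw [C.inv _ _ _ (C.hK _ p.2), C.inv _ _ _ C.ha, neg_neg, hcomm _ _ _ (C.br_self _) p.2]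
  have hC : Pairwise (Function.onFun Commute T) := by
    intro p q _
    change T p * T q = T q * T p
    ext x
    change C.br p.1 (C.br C.a (C.br q.1 (C.br C.a x))) = C.br q.1 (C.br C.a (C.br p.1 (C.br C.a x)))
    rw [hcomm C.a q.1 _ (C.br_self _) q.2, hcomm C.a p.1 _ (C.br_self _) p.2,
      hcomm p.1 q.1 _ p.2 q.2]
  have htop := LinearMap.IsSymmetric.iSup_iInf_eq_top_of_commute hT hC
  let N : Submodule ℝ E := LinearMap.ker ((C.br v0 * (1 + C.θ) : E →L[ℝ] E) : E →ₗ[ℝ] E)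
  have hN : ⨆ χ : H → ℝ, ⨅ i, Module.End.eigenspace (T i) (χ i) ≤ N := by
    refine iSup_le fun χ => ?_
    intro u hu
    rw [Submodule.mem_iInf] at hu
    have hu' : ∀ p : H, C.br p.1 (C.br C.a u) = χ p • u := fun p =>
      Module.End.mem_eigenspace_iff.1 (hu p)
    classical
    by_contra hmem
    have hmem' : C.br v0 (u + C.θ u) ≠ 0 := by
      intro h0
      exact hmem (by simpa [N] using h0)
    obtain ⟨p, hp, hpne⟩ := hcon (u + C.θ u) (fun p => if h : C.br C.a p = 0 then χ ⟨p, h⟩ else 0)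
      (by rw [map_add, C.θθ, add_comm]) hmem'
    apply hpne
    rw [dif_pos hp]
    have h1 := hu' ⟨p, hp⟩
    have h2 := congrArg C.θ h1
    simp only [C.θbr, C.ha, C.hK p hp, map_smul] at h2
    rw [map_add, map_add, smul_add, h1, h2]
  rw [htop] at hN
  refine hne (C.cent v0 (C.hK _ hv0) fun x hx => ?_)
  have h1 : x ∈ N := hN trivial
  have h2 : C.br v0 (x + C.θ x) = 0 := by simpa [N] using h1
  rw [hx, ← two_smul ℝ x, map_smul, smul_eq_zero] at h2
  exact h2.resolve_left two_ne_zero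

lemma exists_reflection {v0 : E} (hv0 : C.br C.a v0 = 0) (hne : v0 ≠ 0) :
    ∃ t, C.br C.a t = 0 ∧ (inner ℝ t v0) ≠ 0 ∧ ∃ u, C.θ u = u ∧
      ∀ p, C.br C.a p = 0 → exp (C.br u) p = p - (2 * (inner ℝ t p) / (inner ℝ t t)) • t := by
  obtain ⟨u, l, huK, hv0u, hl⟩ := exists_joint_eigenvector hv0 hne
  have haa := C.br_self C.a
  have hau : C.br C.a u ≠ 0 := by
    intro h
    exact hv0u (C.hab _ _ hv0 h)
  have hu0 : u ≠ 0 := by rintro rfl; simp at hau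
  -- `l a < 0`
  have hla : l C.a < 0 := by
    have h1 := C.inv C.a (C.br C.a u) u C.ha
    rw [hl _ haa, inner_smul_left] at h1
    have h2 : 0 < (inner ℝ (C.br C.a u) (C.br C.a u)) := real_inner_self_pos.2 hau
    have h3 : 0 < (inner ℝ u u) := real_inner_self_pos.2 hu0
    simp only [conj_trivial] at h1
    nlinarith
  obtain ⟨ω, hω, hω2⟩ : ∃ ω : ℝ, 0 < ω ∧ ω * ω = - l C.a :=
    ⟨Real.sqrt (- l C.a), Real.sqrt_pos.2 (by linarith), Real.mul_self_sqrt (by linarith)⟩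
  let v := ω⁻¹ • C.br C.a u
  have hv : v = ω⁻¹ • C.br C.a u := rfl
  let α : E → ℝ := fun p => - l p / ω
  have hpv : ∀ p, C.br C.a p = 0 → C.br p v = - (α p • u) := by
    intro p hp
    rw [hv, map_smul, hl p hp, smul_smul, ← neg_smul]
    congr 1
    simp only [α]; field_simp
  have huH : ∀ p q, C.br C.a p = 0 → C.br C.a q = 0 → (inner ℝ (C.br p u) q) = 0 := by
    intro p q hp hq
    rw [C.inv _ _ _ (C.hK p hp), C.hab p q hp hq]; simp
  have hpu : ∀ p, C.br C.a p = 0 → C.br p u = α p • v := by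
    intro p hp
    have h1 : C.br C.a (C.br p u - α p • v) = 0 := by
      rw [map_sub, map_smul, hpv _ haa, C.jac C.a p u, hp, hl p hp]
      simp only [zero_apply, map_zero, zero_add, smul_smul, ← neg_smul, ← sub_smul]
      have : l p - α p * -α C.a = 0 := by
        have h3 : l C.a = -(ω * ω) := by linarith
        simp only [α]
        rw [h3]
        field_simp
        ring
      rw [this, zero_smul]
    have h2 : ∀ q, C.br C.a q = 0 → (inner ℝ (C.br p u - α p • v) q) = 0 := by
      intro q hq
      rw [inner_sub_left, huH p q hp hq, hv, inner_smul_left, inner_smul_left, huH _ q haa hq]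
      simp
    exact sub_eq_zero.1 (inner_self_eq_zero.1 (h2 _ h1))
  have hvK : C.θ v = v := by
    rw [hv, map_smul, br_mem_fix C.ha huK]
  let t := C.br u v
  have ht : t = C.br u v := rfl
  have htH : C.br C.a t = 0 := by
    rw [ht, C.jac, hpu _ haa, hpv _ haa]
    simp [C.br_self]
  have hvv : 0 < (inner ℝ v v) := by
    refine real_inner_self_pos.2 ?_
    exact smul_ne_zero (inv_ne_zero hω.ne') hau
  have htp : ∀ p, C.br C.a p = 0 → (inner ℝ t p) = α p * (inner ℝ v v) := by
    intro p hp
    rw [ht, C.inv _ _ _ huK, C.skew u p, hpu p hp, inner_neg_right, neg_neg, inner_smul_right]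
  have hαv0 : α v0 ≠ 0 := by
    intro h
    rw [hpu v0 hv0, h, zero_smul] at hv0u
    exact hv0u rfl
  have htv0 : (inner ℝ t v0) ≠ 0 := by
    rw [htp v0 hv0]; exact mul_ne_zero hαv0 hvv.ne'
  have ht0 : t ≠ 0 := by
    intro h; rw [h, inner_zero_left] at htv0; exact htv0 rfl
  have htt : 0 < (inner ℝ t t) := real_inner_self_pos.2 ht0
  have hαt : 0 < α t := by
    have := htp t htH
    rw [this] at htt
    exact pos_of_mul_pos_left htt hvv.le
  obtain ⟨η, hη, hη2⟩ : ∃ η : ℝ, 0 < η ∧ η * η = α t :=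
    ⟨Real.sqrt (α t), Real.sqrt_pos.2 hαt, Real.mul_self_sqrt hαt.le⟩
  refine ⟨t, htH, htv0, (Real.pi / η) • u, by rw [map_smul, huK], ?_⟩
  intro p hp
  have hup : ∀ q, C.br C.a q = 0 → C.br u q = - (α q • v) := by
    intro q hq
    rw [C.skew, hpu q hq]
  let γ : ℝ → E := fun s => p - α p • ((Real.sin (η * s) / η) • v
    + ((1 - Real.cos (η * s)) / (η * η)) • t)
  have hγ : ∀ s, HasDerivAt γ (C.br u (γ s)) s := by
    intro s
    have hin : HasDerivAt (fun s : ℝ => η * s) η s := by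
      simpa using (hasDerivAt_id s).const_mul η
    have h1 : HasDerivAt (fun s : ℝ => Real.sin (η * s) / η) (Real.cos (η * s)) s := by
      refine (hin.sin.div_const η).congr_deriv ?_
      field_simp
    have h2 : HasDerivAt (fun s : ℝ => (1 - Real.cos (η * s)) / (η * η)) (Real.sin (η * s) / η) s := by
      refine ((hin.cos.const_sub 1).div_const (η * η)).congr_deriv ?_
      field_simp
    have h3 := (((h1.smul_const v).add (h2.smul_const t)).const_smul (α p)).const_sub p
    refine h3.congr_deriv ?_
    simp only [γ, map_sub, map_smul, map_add]
    rw [hup p hp, hup t htH, ← ht, ← hη2]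
    have e : ((1 - Real.cos (η * s)) / (η * η)) • -((η * η) • v) = -(1 - Real.cos (η * s)) • v := by
      rw [smul_neg, smul_smul, neg_smul]
      congr 2
      field_simp
    rw [e]
    module
  have h1 := flow_unique (C.br u) γ hγ (Real.pi / η)
  have h0 : γ 0 = p := by simp [γ]
  rw [h0] at h1
  rw [map_smul, ← h1]
  have h2 : η * (Real.pi / η) = Real.pi := by field_simp
  simp only [γ, h2, Real.sin_pi, Real.cos_pi, zero_div, zero_smul, zero_add, smul_smul]
  congr 2
  rw [htp p hp, htp t htH, ← hη2]
  field_simp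
  norm_num

variable (C) in
/-- the centralizer of `a` -/
noncomputable def H : Submodule ℝ E := LinearMap.ker (C.br C.a : E →ₗ[ℝ] E)

lemma mem_H {x : E} : x ∈ C.H ↔ C.br C.a x = 0 := by simp [H]

variable (C) in
/-- subspaces carrying a Coxeter-like element -/
def Good (U : Submodule ℝ E) : Prop :=
  U ≤ C.H ∧ ∃ w ∈ C.S, (∀ v ∈ C.H, w v - v ∈ U) ∧ ∀ v ∈ C.H, w v = v → ∀ y ∈ U, (inner ℝ y v) = 0

lemma good_H : C.Good C.H := by
  have hbot : C.Good ⊥ := ⟨bot_le, 1, one_mem_S, by simp, by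
    intro v _ _ y hy
    rw [(Submodule.mem_bot ℝ).1 hy, inner_zero_left]⟩
  obtain ⟨U, hU, hmax⟩ : ∃ U, C.Good U ∧ ∀ U', C.Good U' → ¬ U < U' := by
    obtain ⟨U, hU, hm⟩ := WellFounded.has_min (wellFounded_gt (α := Submodule ℝ E)) {U | C.Good U}
      ⟨⊥, hbot⟩
    exact ⟨U, hU, fun U' h => hm U' h⟩
  obtain ⟨hle, w, hwS, hw1, hw2⟩ := id hU
  by_cases hUH : U = C.H
  · rwa [← hUH]
  exfalso
  have hlt : U < C.H := lt_of_le_of_ne hle hUH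
  -- a vector in H orthogonal to U
  obtain ⟨x, hxH, hxU⟩ := SetLike.exists_of_lt hlt
  obtain ⟨y, hyU, z, hz, hxyz⟩ := U.exists_add_mem_mem_orthogonal x
  have hzH : z ∈ C.H := by
    have : z = x - y := by rw [hxyz]; abel
    rw [this]; exact C.H.sub_mem hxH (hle hyU)
  have hz0 : z ≠ 0 := by
    rintro rfl
    rw [add_zero] at hxyz
    exact hxU (hxyz ▸ hyU)
  obtain ⟨t, htH, htz, u, huK, hrefl⟩ := exists_reflection (mem_H.1 hzH) hz0
  have htU : t ∉ U := fun h => htz ((Submodule.mem_orthogonal U z).1 hz t h)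
  have ht0 : (inner ℝ t t) ≠ 0 := by
    intro h
    rw [inner_self_eq_zero.1 h, inner_zero_left] at htz
    exact htz rfl
  refine hmax (U ⊔ Submodule.span ℝ {t}) ⟨sup_le hle ?_, w * exp (C.br u), S_mul_exp hwS huK, ?_, ?_⟩
    ?_
  · rw [Submodule.span_singleton_le_iff_mem]; exact mem_H.2 htH
  · intro v hv
    rw [mul_apply_eq_comp]
    have hs := hrefl v (mem_H.1 hv)
    have hsH : exp (C.br u) v ∈ C.H := by
      rw [hs]; exact C.H.sub_mem hv (C.H.smul_mem _ (mem_H.2 htH))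
    have e : w (exp (C.br u) v) - v = (w (exp (C.br u) v) - exp (C.br u) v) +
      (-(2 * (inner ℝ t v) / (inner ℝ t t))) • t := by
      conv_lhs => rw [← sub_add_sub_cancel _ (exp (C.br u) v) v]
      congr 1
      rw [hs]; module
    rw [e]
    exact Submodule.add_mem_sup (hw1 _ hsH) (Submodule.smul_mem _ _ (Submodule.mem_span_singleton_self t))
  · intro v hv hfix
    rw [mul_apply_eq_comp] at hfix
    have hs := hrefl v (mem_H.1 hv)
    have hsH : exp (C.br u) v ∈ C.H := by
      rw [hs]; exact C.H.sub_mem hv (C.H.smul_mem _ (mem_H.2 htH))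
    have h1 := hw1 _ hsH
    have e : w (exp (C.br u) v) - exp (C.br u) v = (2 * (inner ℝ t v) / (inner ℝ t t)) • t := by
      rw [hfix, hs]; module
    rw [e] at h1
    have hcoef : 2 * (inner ℝ t v) / (inner ℝ t t) = 0 := by
      by_contra hne
      exact htU ((U.smul_mem_iff hne).1 h1)
    rw [hcoef, zero_smul, sub_zero] at hs
    rw [hs] at hfix
    have htv : (inner ℝ t v) = 0 := by
      rcases div_eq_zero_iff.1 hcoef with h | h
      · linarith
      · exact absurd h ht0
    intro y hy
    obtain ⟨y1, hy1, y2, hy2, rfl⟩ := Submodule.mem_sup.1 hy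
    obtain ⟨r, rfl⟩ := Submodule.mem_span_singleton.1 hy2
    rw [inner_add_left, hw2 v hv hfix y1 hy1, inner_smul_left, htv]; simp
  · refine lt_of_le_of_ne le_sup_left fun h => htU ?_
    rw [h]
    exact Submodule.mem_sup_right (Submodule.mem_span_singleton_self t)

theorem exists_orthogonal (C : CartanData E) :
    ∃ c ∈ C.G, ∀ x y, C.br C.a x = 0 → C.br C.a y = 0 → (inner ℝ (c x) y) = 0 := by
  obtain ⟨-, w, ⟨hwG, c, hc, hfix⟩, hw1, hw2⟩ := C.good_H
  refine ⟨c, hc, ?_⟩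
  intro x y hx hy
  let f : C.H →ₗ[ℝ] C.H := LinearMap.codRestrict C.H
    (((w - 1 : E →L[ℝ] E) : E →ₗ[ℝ] E) ∘ₗ C.H.subtype) (fun v => by simpa using hw1 v v.2)
  have hf : ∀ v : C.H, ((f v : C.H) : E) = w v - v := fun v => by simp [f]
  have hinj : Function.Injective f := by
    rw [← LinearMap.ker_eq_bot, LinearMap.ker_eq_bot']
    intro v hv
    have h1 := hf v
    rw [hv] at h1
    have h2 : w v = v := sub_eq_zero.1 h1.symm
    exact Subtype.ext (inner_self_eq_zero.1 (hw2 v v.2 h2 v v.2))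
  obtain ⟨v, hv⟩ := LinearMap.injective_iff_surjective.1 hinj ⟨y, mem_H.2 hy⟩
  have h1 := hf v
  rw [hv] at h1
  change y = w v - v at h1
  rw [h1, inner_sub_right]
  nth_rewrite 1 [← hfix x hx]
  rw [inner_map hwG, sub_self]

lemma br_eq_zero_conj {c : E →L[ℝ] E} (hc : c ∈ C.G) {y : E} (hy : C.br (c C.a) y = 0) :
    C.br C.a (star c y) = 0 := by
  have := congrArg (fun w => (star c) w) hy
  simp only [(star_mem hc).2.1, star_apply_apply hc, map_zero] at this
  exact this

theorem exists_sum {c : E →L[ℝ] E} (hc : c ∈ C.G)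
    (ho : ∀ x y, C.br C.a x = 0 → C.br C.a y = 0 → (inner ℝ (c x) y) = 0) (x : E) :
    ∃ u v, x = C.br C.a u + C.br (c C.a) v := by
  have hb : C.θ (c C.a) = c C.a := by rw [← hc.2.2, C.ha]
  have htop : LinearMap.range (C.br C.a : E →ₗ[ℝ] E) ⊔
      LinearMap.range (C.br (c C.a) : E →ₗ[ℝ] E) = ⊤ := by
    rw [← Submodule.orthogonal_eq_bot_iff, Submodule.eq_bot_iff]
    intro q hq
    rw [Submodule.mem_orthogonal] at hq
    have h1 : ∀ z, C.θ z = z → (∀ y, (inner ℝ (C.br z y) q) = 0) → C.br z q = 0 := by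
      intro z hz h
      have := h (C.br z q)
      rw [C.inv _ _ _ hz, neg_eq_zero, inner_self_eq_zero] at this
      exact this
    have h2 := h1 _ C.ha fun y => hq _ (Submodule.mem_sup_left ⟨y, rfl⟩)
    have h3 := h1 _ hb fun y => hq _ (Submodule.mem_sup_right ⟨y, rfl⟩)
    have h4 := ho _ q (br_eq_zero_conj hc h3) h2
    rw [apply_star_apply hc] at h4
    exact inner_self_eq_zero.1 h4
  have hx : x ∈ LinearMap.range (C.br C.a : E →ₗ[ℝ] E) ⊔
      LinearMap.range (C.br (c C.a) : E →ₗ[ℝ] E) := by rw [htop]; trivial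
  obtain ⟨_, ⟨u, rfl⟩, _, ⟨v, rfl⟩, h⟩ := Submodule.mem_sup.1 hx
  exact ⟨u, v, h.symm⟩

end CartanData

end CartanOrtho

section Assembly

universe uL

theorem exists_innerModel (L : Type uL) [AddCommGroup L] [Module ℝ L] (B : L →ₗ[ℝ] L →ₗ[ℝ] ℝ)
    (hs : ∀ x y, B x y = B y x) (hp : ∀ x, x ≠ 0 → 0 < B x x) :
    ∃ (E : Type uL) (_ : NormedAddCommGroup E) (_ : InnerProductSpace ℝ E) (e : L ≃ₗ[ℝ] E),
      ∀ x y, inner ℝ (e x) (e y) = B x y := by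
  let core : InnerProductSpace.Core ℝ L :=
    { inner := fun x y => B x y
      conj_inner_symm := fun x y => by simpa using hs y x
      re_inner_nonneg := fun x => by
        by_cases hx : x = 0
        · simp [hx]
        · simpa using (hp x hx).le
      add_left := fun x y z => by simp
      smul_left := fun x y r => by simp
      definite := fun x hx => by
        by_contra h
        exact (hp x h).ne' hx }
  exact ⟨L, core.toNormedAddCommGroup, InnerProductSpace.ofCore core.toCore,
    LinearEquiv.refl ℝ L, fun x y => rfl⟩

variable {L : Type uL} [LieRing L] [LieAlgebra ℝ L] [FiniteDimensional ℝ L]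

theorem killing_inv (x y z : L) : killingForm ℝ L ⁅x, y⁆ z = - killingForm ℝ L y ⁅x, z⁆ :=
  LieModule.traceForm_apply_lie_apply' ℝ L L x y z

theorem killing_symm (x y : L) : killingForm ℝ L x y = killingForm ℝ L y x :=
  LieModule.traceForm_comm ℝ L L x y

theorem lie_eq_zero_of_engel (θ : L ≃ₗ⁅ℝ⁆ L)
    (hpos : ∀ x : L, x ≠ 0 → 0 < -(killingForm ℝ L x (θ x)))
    {z x : L} (hz : θ z = z) (hx : x ∈ LieSubalgebra.engel ℝ z) : ⁅z, x⁆ = 0 := by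
  have key : ∀ y : L, ⁅z, ⁅z, y⁆⁆ = 0 → ⁅z, y⁆ = 0 := by
    intro y hy
    by_contra h
    have h1 := hpos _ h
    have h2 : θ ⁅z, y⁆ = ⁅z, θ y⁆ := by rw [LieEquiv.map_lie, hz]
    have h3 : ⁅z, θ ⁅z, y⁆⁆ = 0 := by
      have : θ ⁅z, ⁅z, y⁆⁆ = 0 := by rw [hy, map_zero]
      rwa [LieEquiv.map_lie, hz] at this
    rw [killing_inv, h3] at h1
    simp at h1
  obtain ⟨n, hn⟩ := (LieSubalgebra.mem_engel_iff ℝ z x).1 hx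
  induction n generalizing x with
  | zero => 
    have : x = 0 := by simpa using hn
    simp [this]
  | succ n ih =>
    have h1 : ((LieAlgebra.ad ℝ L z) ^ n) ⁅z, x⁆ = 0 := by
      rw [pow_succ] at hn
      exact hn
    apply key
    exact ih ((LieSubalgebra.mem_engel_iff ℝ z _).2 ⟨n, h1⟩) h1

theorem mem_engel_of_lie {z x : L} (h : ⁅z, x⁆ = 0) : x ∈ LieSubalgebra.engel ℝ z :=
  (LieSubalgebra.mem_engel_iff ℝ z x).2 ⟨1, by simpa using h⟩

theorem engel_le_k (k : LieSubalgebra ℝ L)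
    (hrank : LieAlgebra.rank ℝ k = LieAlgebra.rank ℝ L)
    (a : L) (hak : a ∈ k) (ha : LieAlgebra.IsRegular ℝ a) :
    LieSubalgebra.engel ℝ a ≤ k := by
  have h1 := (LieAlgebra.isRegular_iff_finrank_engel_eq_rank ℝ a).1 ha
  have h2 := LieAlgebra.rank_le_finrank_engel ℝ (⟨a, hak⟩ : k)
  let ι : k →ₗ[ℝ] L := k.toSubmodule.subtype
  set S : Submodule ℝ L := (LieSubalgebra.engel ℝ (⟨a, hak⟩ : k)).toSubmodule.map ι with hS
  have hle : S ≤ (LieSubalgebra.engel ℝ a).toSubmodule := by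
    rintro _ ⟨x, hx, rfl⟩
    obtain ⟨n, hn⟩ := (LieSubalgebra.mem_engel_iff ℝ (⟨a, hak⟩ : k) x).1 hx
    refine (LieSubalgebra.mem_engel_iff ℝ a _).2 ⟨n, ?_⟩
    have : ∀ (m : ℕ) (y : k), ((LieAlgebra.ad ℝ L a) ^ m) (y : L)
        = (((LieAlgebra.ad ℝ k ⟨a, hak⟩) ^ m) y : k) := by
      intro m
      induction m with
      | zero => intro y; simp
      | succ m ih =>
        intro y
        rw [pow_succ, pow_succ]
        exact ih ⁅(⟨a, hak⟩ : k), y⁆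
    have h := this n x
    rw [hn] at h
    exact h
  have hfr : Module.finrank ℝ S = Module.finrank ℝ (LieSubalgebra.engel ℝ (⟨a, hak⟩ : k)).toSubmodule :=
    (Submodule.equivMapOfInjective ι k.toSubmodule.injective_subtype _).finrank_eq.symm
  have heq : S = (LieSubalgebra.engel ℝ a).toSubmodule := by
    apply Submodule.eq_of_le_of_finrank_le hle
    rw [hfr]
    change Module.finrank ℝ (LieSubalgebra.engel ℝ a) ≤ Module.finrank ℝ (LieSubalgebra.engel ℝ (⟨a, hak⟩ : k))
    rw [h1, ← hrank]
    exact h2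
  intro x hx
  have hx' : x ∈ S := by rw [heq]; exact hx
  obtain ⟨y, -, rfl⟩ := hx'
  exact y.2

theorem engel_le_engel (a : L) (ha : LieAlgebra.IsRegular ℝ a) {x : L}
    (hx : x ∈ LieSubalgebra.engel ℝ a) : LieSubalgebra.engel ℝ a ≤ LieSubalgebra.engel ℝ x := by
  have h1 := (LieAlgebra.isRegular_iff_finrank_engel_eq_rank ℝ a).1 ha
  have hc : ((Module.finrank ℝ L : ℕ) : Cardinal) ≤ Cardinal.mk ℝ :=
    Cardinal.natCast_lt_aleph0.le.trans (Cardinal.aleph0_le_mk ℝ)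
  have hself : a ∈ LieSubalgebra.engel ℝ a := mem_engel_of_lie (lie_self a)
  have hbot := LieAlgebra.engel_isBot_of_isMin hc (LieSubalgebra.engel ℝ a)
    ⟨LieSubalgebra.engel ℝ a, a, hself, rfl⟩ le_rfl (by
      rintro ⟨_, y, hy, rfl⟩ hle
      have hle' : LieSubalgebra.engel ℝ y ≤ LieSubalgebra.engel ℝ a := hle
      have : (LieSubalgebra.engel ℝ y).toSubmodule = (LieSubalgebra.engel ℝ a).toSubmodule := by
        apply Submodule.eq_of_le_of_finrank_le hle'
        change Module.finrank ℝ (LieSubalgebra.engel ℝ a) ≤ Module.finrank ℝ (LieSubalgebra.engel ℝ y)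
        rw [h1]
        exact LieAlgebra.rank_le_finrank_engel ℝ y
      change (LieSubalgebra.engel ℝ a).toSubmodule ≤ (LieSubalgebra.engel ℝ y).toSubmodule
      exact this.ge)
  exact hbot ⟨LieSubalgebra.engel ℝ x, x, hx, rfl⟩

theorem killing_center (hnd : (killingForm ℝ L).Nondegenerate) (w : L) (h : ∀ x : L, ⁅w, x⁆ = 0) :
    w = 0 := by
  apply hnd.1 w
  intro y
  have h0 : LieModule.toEnd ℝ L L w = 0 := by
    ext x; simpa using h x
  rw [killingForm, LieModule.traceForm_apply_apply, h0]
  simp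

theorem killing_der (hnd : (killingForm ℝ L).Nondegenerate) (D : L →ₗ[ℝ] L)
    (hD : ∀ x y, D ⁅x, y⁆ = ⁅D x, y⁆ + ⁅x, D y⁆) : ∃ w : L, ∀ x, ⁅w, x⁆ = D x := by
  have : LieAlgebra.IsKilling ℝ L := ⟨by
    rw [eq_bot_iff]
    intro x hx
    rw [LieIdeal.mem_killingCompl] at hx
    have : x = 0 := hnd.1 x fun y => by
      rw [killing_symm]; exact hx y (by simp)
    simp [this]⟩
  let D' : LieDerivation ℝ L L := ⟨D, fun x y => by
    rw [hD, ← lie_skew y (D x)]; abel⟩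
  obtain ⟨w, hw⟩ := LieDerivation.IsKilling.exists_eq_ad D'
  refine ⟨w, fun x => ?_⟩
  have := congrArg (fun d : LieDerivation ℝ L L => d x) hw
  have h2 : D' x = D x := rfl
  rw [← h2]
  simpa using this

end Assembly

theorem nonhermitian_full_rank (L : Type*) [LieRing L] [LieAlgebra ℝ L] [FiniteDimensional ℝ L]
    (hnd : (killingForm ℝ L).Nondegenerate)
    (θ : L ≃ₗ⁅ℝ⁆ L) (hinv : ∀ x : L, θ (θ x) = x)
    (hpos : ∀ x : L, x ≠ 0 → 0 < -(killingForm ℝ L x (θ x)))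
    (k : LieSubalgebra ℝ L) (hk : ∀ x : L, x ∈ k ↔ θ x = x)
    (hknd : (killingForm ℝ k).Nondegenerate)
    (hrank : LieAlgebra.rank ℝ k = LieAlgebra.rank ℝ L)
    (a : L) (hak : a ∈ k) (ha : LieAlgebra.IsRegular ℝ a) :
    ∃ b : L, b ∈ k ∧ LieAlgebra.IsRegular ℝ b ∧
      (∀ x : L, ∃ u v : L, x = ⁅a, u⁆ + ⁅b, v⁆) ∧
      killingForm ℝ L a b = 0 ∧
      (∀ x y : L, ⁅a, x⁆ = 0 → ⁅b, y⁆ = 0 → killingForm ℝ L x y = 0) := by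
  have hθκ : ∀ x y, killingForm ℝ L (θ x) (θ y) = killingForm ℝ L x y := fun x y =>
    LieAlgebra.killingForm_of_equiv_apply θ x y
  let B : L →ₗ[ℝ] L →ₗ[ℝ] ℝ := -((killingForm ℝ L).compl₂ (θ : L →ₗ[ℝ] L))
  have hB : ∀ x y, B x y = - killingForm ℝ L x (θ y) := fun x y => rfl
  obtain ⟨E, _, _, e, he⟩ := exists_innerModel L B
    (fun x y => by
      rw [hB, hB, ← hθκ x, hinv, killing_symm])
    (fun x hx => hpos x hx)
  have : FiniteDimensional ℝ E := e.finiteDimensional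
  have : CompleteSpace E := FiniteDimensional.complete ℝ E
  have hθa : θ a = a := (hk a).1 hak
  have hCk : ∀ x, ⁅a, x⁆ = 0 → θ x = x := fun x hx =>
    (hk x).1 (engel_le_k k hrank a hak ha (mem_engel_of_lie hx))
  let brL : E →ₗ[ℝ] E →ₗ[ℝ] E :=
    LinearMap.mk₂ ℝ (fun x y => e ⁅e.symm x, e.symm y⁆)
      (fun x y z => by simp) (fun r x y => by simp) (fun x y z => by simp) (fun r x y => by simp)
  let br : E →L[ℝ] E →L[ℝ] E := LinearMap.toContinuousBilinearMap brL
  have hbr : ∀ x y, br x y = e ⁅e.symm x, e.symm y⁆ := fun x y => rfl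
  let th : E →L[ℝ] E :=
    LinearMap.toContinuousLinearMap ((e : L →ₗ[ℝ] E) ∘ₗ (θ : L →ₗ[ℝ] L) ∘ₗ (e.symm : E →ₗ[ℝ] L))
  have hth : ∀ x, th x = e (θ (e.symm x)) := fun x => rfl
  have hth' : ∀ x, th x = x ↔ θ (e.symm x) = e.symm x := fun x => by
    rw [hth, ← LinearEquiv.eq_symm_apply]
  have he' : ∀ x y : E, inner ℝ x y = - killingForm ℝ L (e.symm x) (θ (e.symm y)) := fun x y => by
    rw [← hB, ← he]; simp
  let C : CartanData E :=
    { br := br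
      θ := th
      a := e a
      skew := fun x y => by rw [hbr, hbr, ← map_neg, lie_skew]
      jac := fun x y z => by simp [hbr]
      inj := fun w hw => by
        have : e.symm w = 0 := killing_center hnd _ fun x => by
          have := hw (e x)
          rw [hbr] at this
          simpa using this
        simpa using this
      der := fun D hD => by
        obtain ⟨w, hw⟩ := killing_der hnd
          ((e.symm : E →ₗ[ℝ] L) ∘ₗ (D : E →ₗ[ℝ] E) ∘ₗ (e : L →ₗ[ℝ] E)) (fun x y => by
            have := hD (e x) (e y)
            simp only [hbr, LinearEquiv.symm_apply_apply] at this
            simp [this])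
        refine ⟨e w, ?_⟩
        ext x
        rw [hbr]
        simp [hw]
      θθ := fun x => by simp [hth, hinv]
      θbr := fun x y => by simp only [hth, hbr, LinearEquiv.symm_apply_apply, LieEquiv.map_lie]
      inv := fun z x y hz => by
        rw [hth'] at hz
        rw [he', he', hbr, hbr]
        simp only [LinearEquiv.symm_apply_apply, LieEquiv.map_lie, hz]
        rw [killing_inv]
      ha := by rw [hth']; simpa using hθa
      hK := fun x hx => by
        rw [hth']
        rw [hbr] at hx
        exact hCk _ (by simpa using hx)
      hab := fun x y hx hy => by
        rw [hbr] at hx hy ⊢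
        have hx' : ⁅a, e.symm x⁆ = 0 := by simpa using hx
        have hy' : ⁅a, e.symm y⁆ = 0 := by simpa using hy
        have := lie_eq_zero_of_engel θ hpos (hCk _ hx')
          (engel_le_engel a ha (mem_engel_of_lie hx') (mem_engel_of_lie hy'))
        rw [this, map_zero]
      cent := fun v hv hvx => by
        rw [hth'] at hv
        have h0 : (⟨e.symm v, (hk _).2 hv⟩ : k) = 0 := killing_center hknd _ fun x => by
          have hx : θ (x : L) = x := (hk _).1 x.2
          have := hvx (e x) (by rw [hth']; simpa using hx)
          rw [hbr] at this
          apply Subtype.ext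
          simpa using this
        have h1 : e.symm v = 0 := congrArg Subtype.val h0
        simpa using h1 }
  have hCbr : ∀ x y, C.br x y = e ⁅e.symm x, e.symm y⁆ := hbr
  have hCa : C.a = e a := rfl
  obtain ⟨c, hc, hco⟩ := C.exists_orthogonal
  have hcth : ∀ x, c (e (θ (e.symm x))) = e (θ (e.symm (c x))) := fun x => hc.2.2 x
  set b : L := e.symm (c (e a)) with hb
  have hθb : θ b = b := by
    have h := hcth (e a)
    rw [LinearEquiv.symm_apply_apply, hθa] at h
    apply e.injective
    rw [hb, ← h]; simp
  have heb : e b = c C.a := by rw [hb, hCa]; simp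
  have hbconj : ∀ y, ⁅b, y⁆ = 0 → C.br C.a (star c (e y)) = 0 := fun y hy => by
    apply C.br_eq_zero_conj hc
    rw [hCbr, ← heb]; simp [hy]
  have hort : ∀ x y : L, ⁅a, x⁆ = 0 → ⁅b, y⁆ = 0 → killingForm ℝ L x y = 0 := by
    intro x y hx hy
    have h := hco (star c (e y)) (e x) (hbconj y hy) (by rw [hCbr, hCa]; simp [hx])
    rw [C.apply_star_apply hc, he, hB, hCk x hx, killing_symm] at h
    linarith
  refine ⟨b, (hk b).2 hθb, ?_, ?_, hort a b (lie_self a) (lie_self b), hort⟩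
  · rw [LieAlgebra.isRegular_iff_finrank_engel_eq_rank]
    have h1 := (LieAlgebra.isRegular_iff_finrank_engel_eq_rank ℝ a).1 ha
    apply le_antisymm _ (LieAlgebra.rank_le_finrank_engel ℝ b)
    rw [← h1]
    let f : L →ₗ[ℝ] L :=
      (e.symm : E →ₗ[ℝ] L) ∘ₗ ((star c : E →L[ℝ] E) : E →ₗ[ℝ] E) ∘ₗ (e : L →ₗ[ℝ] E)
    have hf : ∀ x, f x = e.symm (star c (e x)) := fun x => rfl
    have hinj : Function.Injective f := by
      intro x y hxy
      rw [hf, hf] at hxy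
      have h2 := congrArg c (e.symm.injective hxy)
      rw [C.apply_star_apply hc, C.apply_star_apply hc] at h2
      exact e.injective h2
    have hmap : (LieSubalgebra.engel ℝ b).toSubmodule.map f ≤ (LieSubalgebra.engel ℝ a).toSubmodule := by
      rintro _ ⟨y, hy, rfl⟩
      have h3 := hbconj y (lie_eq_zero_of_engel θ hpos hθb hy)
      rw [hCbr, hCa] at h3
      apply mem_engel_of_lie
      rw [hf]
      simpa using h3
    have h4 := Submodule.finrank_mono hmap
    rw [← (Submodule.equivMapOfInjective f hinj _).finrank_eq] at h4
    exact h4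
  · intro x
    obtain ⟨u, v, huv⟩ := C.exists_sum hc hco (e x)
    refine ⟨e.symm u, e.symm v, ?_⟩
    rw [hCbr, hCbr, ← heb, hCa] at huv
    apply e.injective
    rw [huv]; simp
end

section
/- Let L be a finite-dimensional real Lie algebra with nondegenerate Killing form κ, and let x ∈ L. Then the following are equivalent: (1) there exist a, b ∈ L with a regular such that x = ⁅a, b⁆; (2) there exists a Cartan subalgebra C of L such that κ(x, c) = 0 for all c ∈ C. -/
open Filter Topology

lemma aux_exp_mul {E : Type*} [NormedAddCommGroup E] [NormedSpace ℝ E] [CompleteSpace E]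
    (A : E →L[ℝ] E) : NormedSpace.exp A * NormedSpace.exp (-A) = 1 := by
  letI : NormedAlgebra ℚ (E →L[ℝ] E) := NormedAlgebra.restrictScalars ℚ ℝ _
  rw [← NormedSpace.exp_add_of_commute (Commute.neg_right (Commute.refl A))]
  simp

lemma aux_conj_exp {E : Type*} [NormedAddCommGroup E] [NormedSpace ℝ E] [CompleteSpace E]
    (D : E →L[ℝ] E →L[ℝ] E) (hD : ∀ x y, D (D x y) = D x * D y - D y * D x) (x y : E) :
    D (NormedSpace.exp (D x) y) =
      NormedSpace.exp (D x) * D y * NormedSpace.exp (-(D x)) := by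
  set A := D x with hA
  have h2 : ∀ t : ℝ, HasDerivAt (fun u : ℝ => D (NormedSpace.exp (u • A) y))
      (D (A (NormedSpace.exp (t • A) y))) t := by
    intro t
    have h := (hasDerivAt_exp_smul_const' (𝕂 := ℝ) A t).clm_apply (hasDerivAt_const t y)
    have h' := D.hasFDerivAt.comp_hasDerivAt t h
    refine HasDerivAt.congr_deriv (f := fun u : ℝ => D (NormedSpace.exp (u • A) y)) h' ?_
    simp
  have h3 : ∀ t : ℝ, HasDerivAt (fun u : ℝ => NormedSpace.exp (u • (-A)) *
      D (NormedSpace.exp (u • A) y) * NormedSpace.exp (u • A)) 0 t := by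
    intro t
    have h := ((hasDerivAt_exp_smul_const (𝕂 := ℝ) (-A) t).mul (h2 t)).mul
      (hasDerivAt_exp_smul_const' (𝕂 := ℝ) A t)
    refine h.congr_deriv ?_
    rw [Pi.mul_apply, hA, hD, ← hA]
    noncomm_ring
  have h4 := is_const_of_deriv_eq_zero (fun t => (h3 t).differentiableAt)
    (fun t => (h3 t).deriv) 1 0
  simp only [one_smul, zero_smul, NormedSpace.exp_zero, one_mul, mul_one,
    one_apply_eq_self] at h4
  rw [← h4]
  have e1 := aux_exp_mul A
  rw [← mul_assoc, ← mul_assoc, e1, one_mul, mul_assoc, e1, mul_one]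

lemma aux_open {E : Type*} [NormedAddCommGroup E] [NormedSpace ℝ E] [FiniteDimensional ℝ E]
    (D : E →ₗ[ℝ] E →ₗ[ℝ] E) (hD : ∀ x y, D (D x y) = D x * D y - D y * D x)
    (H : Submodule ℝ E) (h : E) (hh : h ∈ H)
    (hs : ∀ z, ∃ x, ∃ k ∈ H, D x h + k = z) (s : E) :
    ∃ ε : ℝ, 0 < ε ∧ ∀ t : ℝ, 0 < t → t < ε →
      ∃ k ∈ H, ∃ g : E ≃ₗ[ℝ] E, g.conj (D k) = D (h + t • s) := by
  haveI : CompleteSpace E := FiniteDimensional.complete ℝ E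
  haveI : CompleteSpace H := FiniteDimensional.complete ℝ H
  let c : (E →ₗ[ℝ] E) ≃ₗ[ℝ] (E →L[ℝ] E) := LinearMap.toContinuousLinearMap
  let D' : E →L[ℝ] E →L[ℝ] E := LinearMap.toContinuousLinearMap (c.toLinearMap ∘ₗ D)
  have hD'a : ∀ x y, D' x y = D x y := fun x y => rfl
  have hD' : ∀ x y, D' (D' x y) = D' x * D' y - D' y * D' x := by
    intro x y
    ext z
    have := congrArg (fun f => f z) (hD x y)
    simpa [hD'a] using this
  have hF : HasStrictFDerivAt (fun p : E × H => NormedSpace.exp (D' p.1) (p.2 : E))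
      (H.subtypeL.comp (ContinuousLinearMap.snd ℝ E H) +
        (D'.comp (ContinuousLinearMap.fst ℝ E H)).flip h) ((0 : E), (⟨h, hh⟩ : H)) := by
    have e0 : HasStrictFDerivAt (NormedSpace.exp : (E →L[ℝ] E) → (E →L[ℝ] E))
      (1 : (E →L[ℝ] E) →L[ℝ] (E →L[ℝ] E))
        ((D'.comp (ContinuousLinearMap.fst ℝ E H)) ((0 : E), (⟨h, hh⟩ : H))) := by
      simpa using hasStrictFDerivAt_exp_zero (𝕂 := ℝ) (𝔸 := E →L[ℝ] E)
    have e1 := e0.comp ((0 : E), (⟨h, hh⟩ : H))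
      (D'.comp (ContinuousLinearMap.fst ℝ E H)).hasStrictFDerivAt
    have e2 := e1.clm_apply (H.subtypeL.comp (ContinuousLinearMap.snd ℝ E H)).hasStrictFDerivAt
    refine e2.congr_fderiv ?_
    ext p <;> simp
  have hsurj := hF.map_nhds_eq_of_surj (by
    rw [LinearMap.range_eq_top]
    intro z
    obtain ⟨x, k, hk, e⟩ := hs z
    refine ⟨(x, ⟨k, hk⟩), ?_⟩
    simpa [hD'a, add_comm] using e)
  have hmem : Set.range (fun p : E × H => NormedSpace.exp (D' p.1) (p.2 : E)) ∈ 𝓝 h := by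
    have : (𝓝 h) = map (fun p : E × H => NormedSpace.exp (D' p.1) (p.2 : E))
      (𝓝 ((0 : E), (⟨h, hh⟩ : H))) := by
      rw [hsurj]; simp
    rw [this]
    exact range_mem_map
  have hc : Tendsto (fun t : ℝ => h + t • s) (𝓝 0) (𝓝 h) := by
    have : Continuous (fun t : ℝ => h + t • s) := by fun_prop
    simpa using this.tendsto 0
  obtain ⟨ε, hε, hb⟩ := Metric.mem_nhds_iff.mp (hc hmem)
  refine ⟨ε, hε, fun t ht0 ht => ?_⟩
  obtain ⟨⟨x, k⟩, hxk⟩ := hb (show t ∈ Metric.ball (0 : ℝ) ε by simpa [abs_of_pos ht0] using ht)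
  have e1 := aux_exp_mul (D' x)
  have e2 := aux_exp_mul (-D' x)
  rw [neg_neg] at e2
  refine ⟨k, k.2, LinearEquiv.ofLinearMap (NormedSpace.exp (D' x)).toLinearMap
    (NormedSpace.exp (-D' x)).toLinearMap ?_ ?_, ?_⟩
  · ext z; exact congrArg (fun f => f z) e1
  · ext z; exact congrArg (fun f => f z) e2
  · ext z
    have := congrArg (fun f => f z) (aux_conj_exp D' hD' x k)
    simp only at hxk
    rw [hxk] at this
    exact this.symm

section
attribute [local instance] LieRing.ofAssociativeRing

lemma aux_open' (L : Type*) [LieRing L] [LieAlgebra ℝ L] [FiniteDimensional ℝ L]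
    (H : Submodule ℝ L) (h : L) (hh : h ∈ H)
    (hs : ∀ z : L, ∃ x : L, ∃ k ∈ H, ⁅x, h⁆ + k = z) (s : L) :
    ∃ ε : ℝ, 0 < ε ∧ ∀ t : ℝ, 0 < t → t < ε →
      ∃ k ∈ H, ∃ g : L ≃ₗ[ℝ] L, g.conj (LieAlgebra.ad ℝ L k) =
        LieAlgebra.ad ℝ L (h + t • s) := by
  let e := (Module.finBasis ℝ L).equivFun
  letI : NormedAddCommGroup L := NormedAddCommGroup.induced L _ e.toLinearMap e.injective
  letI : NormedSpace ℝ L := NormedSpace.induced ℝ L _ e.toLinearMap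
  refine aux_open (E := L) (LieAlgebra.ad ℝ L).toLinearMap ?_ H h hh hs s
  intro x y
  ext z
  simp

lemma aux_engel_cartan (L : Type*) [LieRing L] [LieAlgebra ℝ L] [FiniteDimensional ℝ L]
    {x : L} (hx : LieAlgebra.IsRegular ℝ x) :
    (LieSubalgebra.engel ℝ x).IsCartanSubalgebra := by
  have h : (Module.finrank ℝ L : Cardinal) ≤ Cardinal.mk ℝ :=
    Cardinal.natCast_le_aleph0.trans <| Cardinal.infinite_iff.mp inferInstance
  refine ⟨?_, LieSubalgebra.normalizer_engel _ _⟩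
  apply LieSubalgebra.isNilpotent_of_forall_le_engel
  intro y hy
  set Ex : {LieSubalgebra.engel ℝ z | z ∈ LieSubalgebra.engel ℝ x} :=
    ⟨LieSubalgebra.engel ℝ x, x, LieSubalgebra.self_mem_engel _ _, rfl⟩
  suffices IsBot Ex from @this ⟨LieSubalgebra.engel ℝ y, y, hy, rfl⟩
  apply LieAlgebra.engel_isBot_of_isMin h (LieSubalgebra.engel ℝ x) Ex le_rfl
  rintro ⟨_, y, hy, rfl⟩ hyx
  suffices Module.finrank ℝ (LieSubalgebra.engel ℝ x) ≤
      Module.finrank ℝ (LieSubalgebra.engel ℝ y) by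
    suffices LieSubalgebra.engel ℝ y = LieSubalgebra.engel ℝ x from this.ge
    apply LieSubalgebra.toSubmodule_injective
    exact Submodule.eq_of_le_of_finrank_le hyx this
  rw [(LieAlgebra.isRegular_iff_finrank_engel_eq_rank ℝ x).mp hx]
  apply LieAlgebra.rank_le_finrank_engel

/-- A Cartan subalgebra (in the abelian case) is the Engel subalgebra of one of its elements. -/
lemma aux_cartan_engel (L : Type*) [LieRing L] [LieAlgebra ℝ L] [FiniteDimensional ℝ L]
    (H : LieSubalgebra ℝ L) [H.IsCartanSubalgebra] (hab : ∀ x ∈ H, ∀ y ∈ H, ⁅x, y⁆ = 0) :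
    ∃ h ∈ H, LieSubalgebra.engel ℝ h ≤ H := by
  have hc : (Module.finrank ℝ L : Cardinal) ≤ Cardinal.mk ℝ :=
    Cardinal.natCast_le_aleph0.trans <| Cardinal.infinite_iff.mp inferInstance
  let f : H → ℕ := fun h => Module.finrank ℝ (LieSubalgebra.engel ℝ (h : L))
  let h := Function.argmin f
  have hmin : ∀ y : H, f h ≤ f y := fun y => Function.argmin_le f y
  refine ⟨h, h.2, ?_⟩
  set Ex : {LieSubalgebra.engel ℝ z | z ∈ H} := ⟨LieSubalgebra.engel ℝ (h : L), h, h.2, rfl⟩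
  have hbot : IsBot Ex := by
    apply LieAlgebra.engel_isBot_of_isMin hc H Ex
    · intro y hy
      exact (LieSubalgebra.mem_engel_iff ℝ _ _).mpr ⟨1, by simpa using hab _ h.2 _ hy⟩
    · rintro ⟨_, y, hy, rfl⟩ hyx
      suffices LieSubalgebra.engel ℝ y = LieSubalgebra.engel ℝ (h : L) from this.ge
      apply LieSubalgebra.toSubmodule_injective
      exact Submodule.eq_of_le_of_finrank_le hyx (hmin ⟨y, hy⟩)
  intro z hz
  rw [← LieAlgebra.zeroRootSubalgebra_eq_of_is_cartan ℝ L H, LieAlgebra.mem_zeroRootSubalgebra]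
  intro y
  exact (LieSubalgebra.mem_engel_iff ℝ _ _).mp (@hbot ⟨LieSubalgebra.engel ℝ (y : L), y, y.2, rfl⟩ z hz)

lemma aux_exists_regular (L : Type*) [LieRing L] [LieAlgebra ℝ L] [FiniteDimensional ℝ L]
    (H : LieSubalgebra ℝ L) [H.IsCartanSubalgebra] (hab : ∀ x ∈ H, ∀ y ∈ H, ⁅x, y⁆ = 0) :
    ∃ a ∈ H, LieAlgebra.IsRegular ℝ a := by
  obtain ⟨h, hh, hle⟩ := aux_cartan_engel L H hab
  obtain ⟨r, hr⟩ := LieAlgebra.exists_isRegular ℝ L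
  have hs : ∀ z : L, ∃ x : L, ∃ k ∈ H.toSubmodule, ⁅x, h⁆ + k = z := by
    intro z
    obtain ⟨n, hn, hn1⟩ := ((LieAlgebra.ad ℝ L h).eventually_isCompl_ker_pow_range_pow.and
      (eventually_ge_atTop 1)).exists
    have hz : z ∈ LinearMap.ker (LieAlgebra.ad ℝ L h ^ n) ⊔
      LinearMap.range (LieAlgebra.ad ℝ L h ^ n) := by rw [hn.sup_eq_top]; trivial
    obtain ⟨k, hk, w, ⟨v, rfl⟩, rfl⟩ := Submodule.mem_sup.mp hz
    obtain ⟨m, rfl⟩ := Nat.exists_eq_add_of_le' hn1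
    refine ⟨-((LieAlgebra.ad ℝ L h ^ m) v), k,
      hle ((LieSubalgebra.mem_engel_iff ℝ _ _).mpr ⟨_, hk⟩), ?_⟩
    rw [neg_lie, lie_skew, pow_succ', Module.End.mul_apply, LieAlgebra.ad_apply, add_comm]
  obtain ⟨ε, hε, hb⟩ := aux_open' L H.toSubmodule h hh hs (r - h)
  classical
  let b := Module.finBasis ℝ L
  let P := (LinearMap.polyCharpoly (LieAlgebra.ad ℝ L).toLinearMap b).coeff (LieAlgebra.rank ℝ L)
  let Q : Polynomial ℝ := MvPolynomial.aeval
    (fun i => Polynomial.C (b.repr h i) + Polynomial.X * Polynomial.C (b.repr (r - h) i)) P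
  have hQ : ∀ t : ℝ, Q.eval t = MvPolynomial.eval (b.repr (h + t • (r - h))) P := by
    intro t
    simp only [Q]
    rw [← Polynomial.coe_aeval_eq_eval, ← AlgHom.comp_apply, MvPolynomial.comp_aeval,
      MvPolynomial.aeval_eq_eval]
    congr 2
    ext i
    simp
  have hQreg : ∀ t : ℝ, LieAlgebra.IsRegular ℝ (h + t • (r - h)) ↔ Q.eval t ≠ 0 := by
    intro t
    rw [hQ]
    exact LieAlgebra.isRegular_iff_coeff_polyCharpoly_rank_ne_zero ℝ b _
  have hQ0 : Q ≠ 0 := by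
    have h1 := (hQreg 1).mp (by simpa using hr)
    rintro h0
    simp [h0] at h1
  obtain ⟨t, ⟨ht0, htε⟩, htQ⟩ : ∃ t ∈ Set.Ioo 0 ε, Q.eval t ≠ 0 := by
    by_contra! hcon
    exact hQ0 (Polynomial.eq_zero_of_infinite_isRoot Q
      ((Set.Ioo_infinite hε).mono fun t ht => hcon t ht))
  obtain ⟨k, hk, g, hg⟩ := hb t ht0 htε
  refine ⟨k, hk, ?_⟩
  have := (hQreg t).mpr htQ
  rw [LieAlgebra.isRegular_def, ← hg, LinearEquiv.charpoly_conj] at this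
  exact this

end

/-- In a real semisimple Lie algebra, `x` is a commutator `⁅a, b⁆` with `a` regular iff `x`
is orthogonal (w.r.t. the Killing form) to some Cartan subalgebra. -/
theorem commutator_iff_orthogonal_to_cartan (L : Type*) [LieRing L] [LieAlgebra ℝ L]
    [FiniteDimensional ℝ L]
    (hnd : (killingForm ℝ L).Nondegenerate) (x : L) :
    (∃ a b : L, LieAlgebra.IsRegular ℝ a ∧ x = ⁅a, b⁆) ↔
    (∃ C : LieSubalgebra ℝ L, C.IsCartanSubalgebra ∧ ∀ c ∈ C, killingForm ℝ L x c = 0) := by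
  haveI : LieAlgebra.IsKilling ℝ L := ⟨by
    ext y
    have h1 : y ∈ LieIdeal.killingCompl ℝ L ⊤ ↔ y ∈ LinearMap.ker (killingForm ℝ L) := by
      rw [← LieIdeal.coe_killingCompl_top]
      rfl
    rw [h1, hnd.ker_eq_bot]
    simp⟩
  have hab : ∀ C : LieSubalgebra ℝ L, C.IsCartanSubalgebra → ∀ x ∈ C, ∀ y ∈ C, ⁅x, y⁆ = 0 := by
    intro C hC x hx y hy
    have := LieAlgebra.IsKilling.instIsLieAbelianOfIsCartanSubalgebra ℝ L C
    exact congrArg Subtype.val (trivial_lie_zero C C ⟨x, hx⟩ ⟨y, hy⟩)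
  constructor
  · rintro ⟨a, b, ha, rfl⟩
    have hC := aux_engel_cartan L ha
    refine ⟨_, hC, fun c hc => ?_⟩
    rw [LieModule.traceForm_apply_lie_apply', hab _ hC a (LieSubalgebra.self_mem_engel ℝ a) c hc]
    simp
  · rintro ⟨C, hC, hx⟩
    obtain ⟨a, haC, ha⟩ := aux_exists_regular L C (hab C hC)
    have hE := aux_engel_cartan L ha
    have hCE : C ≤ LieSubalgebra.engel ℝ a := fun y hy =>
      (LieSubalgebra.mem_engel_iff ℝ _ _).mpr ⟨1, by simpa using hab C hC _ haC _ hy⟩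
    have hEC : LieSubalgebra.engel ℝ a ≤ C := by
      intro y hy
      rw [← hC.self_normalizing, LieSubalgebra.mem_normalizer_iff]
      intro z hz
      rw [hab _ hE y hy z (hCE hz)]
      exact C.zero_mem
    have hker : ∀ y, ⁅a, y⁆ = 0 → y ∈ C := fun y hy =>
      hEC ((LieSubalgebra.mem_engel_iff ℝ _ _).mpr ⟨1, by simpa using hy⟩)
    have hrange : LinearMap.range (LieAlgebra.ad ℝ L a) =
        LinearMap.BilinForm.orthogonal (killingForm ℝ L)
          (LinearMap.ker (LieAlgebra.ad ℝ L a)) := by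
      apply Submodule.eq_of_le_of_finrank_eq
      · rintro _ ⟨v, rfl⟩ y hy
        have hy' : ⁅y, a⁆ = 0 := by
          rw [← lie_skew, neg_eq_zero]; simpa using hy
        change killingForm ℝ L y ⁅a, v⁆ = 0
        rw [← LieModule.traceForm_apply_lie_apply, hy']
        simp
      · rw [LinearMap.BilinForm.finrank_orthogonal hnd]
        have := LinearMap.finrank_range_add_finrank_ker (LieAlgebra.ad ℝ L a)
        omega
    have hxr : x ∈ LinearMap.range (LieAlgebra.ad ℝ L a) := by
      rw [hrange]
      intro y hy
      change killingForm ℝ L y x = 0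
      rw [LieModule.traceForm_comm]
      exact hx y (hker y (by simpa using hy))
    obtain ⟨b, hb⟩ := hxr
    exact ⟨a, b, ha, hb.symm⟩
end

section
/- Let L be a finite-dimensional semisimple Lie algebra over a field of characteristic 0 (i.e. with nondegenerate Killing form). Then there exist elements x, y ∈ L such that L = ⁅x, L⁆ + ⁅y, L⁆, i.e. every element of L is a sum ⁅x, u⁆ + ⁅y, v⁆ for some u, v ∈ L. -/
open LieAlgebra in
lemma aux_exists_y (K L : Type*) [Field K] [CharZero K]
    [LieRing L] [LieAlgebra K L] [FiniteDimensional K L] [LieAlgebra.IsKilling K L]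
    (H : LieSubalgebra K L) [H.IsCartanSubalgebra] :
    ∃ y : L, ∀ h ∈ H, ⁅h, y⁆ = 0 → h = 0 := by
  have hcomm : ∀ a ∈ H, ∀ b ∈ H, Commute (ad K L a) (ad K L b) := by
    intro a ha b hb
    have h1 : ⁅(⟨a, ha⟩ : H), (⟨b, hb⟩ : H)⁆ = 0 := trivial_lie_zero _ _ _ _
    have h2 : ⁅a, b⁆ = 0 := congrArg Subtype.val h1
    refine LinearMap.ext fun v => ?_
    simp only [Module.End.mul_apply, ad_apply]
    rw [leibniz_lie a b v, h2, zero_lie, zero_add]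
  let S : L → Submodule K L := fun y => H.toSubmodule ⊓ LinearMap.ker (ad K L y)
  have hS : ∀ y h, h ∈ S y ↔ h ∈ H ∧ ⁅h, y⁆ = 0 := by
    intro y h
    simp only [S, Submodule.mem_inf, LinearMap.mem_ker, ad_apply, LieSubalgebra.mem_toSubmodule]
    rw [← lie_skew h y, neg_eq_zero]
  obtain ⟨T, ⟨y, rfl⟩, hmin⟩ :=
    (wellFounded_lt (α := Submodule K L)).has_min (Set.range S) ⟨_, 0, rfl⟩
  refine ⟨y, fun h₀ hh₀ h₀y => ?_⟩
  by_contra hne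
  set f := ad K L h₀ with hf
  have hnil : ¬ IsNilpotent f := fun hn =>
    hne (LieAlgebra.IsKilling.eq_zero_of_isNilpotent_ad_of_mem_isCartanSubalgebra (H := H) K L hh₀ hn)
  obtain ⟨n, hn1, hdis⟩ : ∃ n, 1 ≤ n ∧
      Disjoint (LinearMap.ker (f ^ n)) (LinearMap.range (f ^ n)) := by
    obtain ⟨n, hn⟩ := Filter.eventually_atTop.mp f.eventually_disjoint_ker_pow_range_pow
    exact ⟨n + 1, by omega, hn _ (by omega)⟩
  rw [Submodule.disjoint_def] at hdis
  have hkill : ∀ v, f v = 0 → (f ^ n) v = 0 := by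
    intro v hv
    obtain ⟨m, rfl⟩ : ∃ m, n = m + 1 := ⟨n - 1, by omega⟩
    rw [pow_succ, Module.End.mul_apply, hv, map_zero]
  obtain ⟨w, hw⟩ : ∃ w, (f ^ n) w ≠ 0 := by
    by_contra! hc
    exact hnil ⟨n, LinearMap.ext hc⟩
  set z := (f ^ n) w with hz
  have hsplit : ∀ h ∈ H, ⁅h, y + z⁆ = 0 → ⁅h, y⁆ = 0 ∧ ⁅h, z⁆ = 0 := by
    intro h hh hyz
    rw [lie_add] at hyz
    have hc := hcomm h₀ hh₀ h hh
    have e1 : f ⁅h, y⁆ = 0 := by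
      have := LinearMap.congr_fun hc.eq y
      simp only [Module.End.mul_apply, ad_apply] at this
      rw [hf, ad_apply, this, h₀y, lie_zero]
    have e2 : ⁅h, z⁆ = (f ^ n) ⁅h, w⁆ := by
      have := LinearMap.congr_fun (hc.pow_left n).eq w
      simp only [Module.End.mul_apply, ad_apply] at this
      exact this.symm
    have e3 : ⁅h, z⁆ = 0 := by
      apply hdis
      · rw [LinearMap.mem_ker, eq_neg_of_add_eq_zero_right hyz, map_neg, hkill _ e1, neg_zero]
      · exact ⟨_, e2.symm⟩
    exact ⟨by simpa [e3] using hyz, e3⟩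
  apply hmin (S (y + z)) ⟨_, rfl⟩
  refine lt_of_le_of_ne ?_ ?_
  · intro h hh
    rw [hS] at hh ⊢
    exact ⟨hh.1, (hsplit h hh.1 hh.2).1⟩
  · intro heq
    have h1 : h₀ ∈ S (y + z) := by rw [heq, hS]; exact ⟨hh₀, h₀y⟩
    rw [hS] at h1
    exact hw (hdis _ (LinearMap.mem_ker.mpr (hkill _ (hsplit h₀ hh₀ h1.2).2)) ⟨w, rfl⟩)

open LieAlgebra in
/-- A semisimple Lie algebra over a field of characteristic `0` satisfies
`L = ⁅x, L⁆ + ⁅y, L⁆` for some `x`, `y`. -/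
theorem exists_two_ad_ranges_span (K L : Type*) [Field K] [CharZero K]
    [LieRing L] [LieAlgebra K L] [FiniteDimensional K L]
    (hnd : (killingForm K L).Nondegenerate) :
    ∃ x y : L, ∀ z : L, ∃ u v : L, z = ⁅x, u⁆ + ⁅y, v⁆ := by
  have hker : LinearMap.ker (killingForm K L) = ⊥ :=
    LinearMap.separatingLeft_iff_ker_eq_bot.mp hnd.1
  have : LieAlgebra.IsKilling K L := by
    constructor
    rw [← LieSubmodule.toSubmodule_inj]
    exact (LieIdeal.coe_killingCompl_top K L).trans hker
  obtain ⟨x, hx⟩ := exists_isCartanSubalgebra_engel K L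
  obtain ⟨y, hy⟩ := aux_exists_y K L (LieSubalgebra.engel K x)
  have htop : LinearMap.range (ad K L x) ⊔ LinearMap.range (ad K L y) = ⊤ := by
    by_contra hne
    obtain ⟨φ, hφ, hle⟩ := Submodule.exists_le_ker_of_lt_top _ (lt_top_iff_ne_top.mpr hne)
    have hsurj : Function.Surjective (killingForm K L) :=
      (LinearMap.injective_iff_surjective_of_finrank_eq_finrank
        (Subspace.dual_finrank_eq (K := K) (V := L)).symm).mp (LinearMap.ker_eq_bot.mp hker)
    obtain ⟨w, rfl⟩ := hsurj φ
    have key : ∀ a, LinearMap.range (ad K L a) ≤ LinearMap.ker (killingForm K L w) →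
        ⁅w, a⁆ = 0 := by
      intro a ha
      have : ⁅w, a⁆ ∈ LinearMap.ker (killingForm K L) := by
        rw [LinearMap.mem_ker]
        ext u
        have h1 : killingForm K L w ⁅a, u⁆ = 0 := ha ⟨u, rfl⟩
        rw [LieModule.traceForm_apply_lie_apply, h1]
        rfl
      rwa [hker, Submodule.mem_bot] at this
    have hwx := key x (le_sup_left.trans hle)
    have hwy := key y (le_sup_right.trans hle)
    have hwH : w ∈ LieSubalgebra.engel K x := by
      rw [LieSubalgebra.mem_engel_iff]
      refine ⟨1, ?_⟩
      rw [pow_one, ad_apply, ← lie_skew, hwx, neg_zero]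
    exact hφ (by rw [hy w hwH hwy, map_zero])
  refine ⟨x, y, fun z => ?_⟩
  have hz : z ∈ LinearMap.range (ad K L x) ⊔ LinearMap.range (ad K L y) := htop ▸ Submodule.mem_top
  obtain ⟨_, ⟨u, rfl⟩, _, ⟨v, rfl⟩, h⟩ := Submodule.mem_sup.mp hz
  exact ⟨u, v, h.symm⟩
end

section
/- Let L be a finite-dimensional real Lie algebra whose Killing form κ is negative definite, let C be a Cartan subalgebra of L, and let C⊥ = {x ∈ L : κ(x, c) = 0 for all c ∈ C}. Let V ⊆ L be a subset stable under every Lie algebra automorphism of L (g(V) ⊆ V for every Lie algebra self-equivalence g of L). Then V equals the union, over all Lie algebra automorphisms g of L, of the images g(V ∩ C⊥); that is, for every v ∈ V there exist an automorphism g and w ∈ V ∩ C⊥ with v = g(w). -/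
open NormedSpace in
/-- Orbits of a one-parameter group are differentiable. -/
lemma aux_exp_deriv {E : Type*} [NormedAddCommGroup E] [NormedSpace ℝ E] [CompleteSpace E]
    (D : E →L[ℝ] E) (a : E) (t : ℝ) :
    HasDerivAt (fun t : ℝ => (exp (t • D)) a) ((exp (t • D)) (D a)) t := by
  have h := hasDerivAt_exp_smul_const (𝕂 := ℝ) D t
  have := h.clm_apply (hasDerivAt_const t a)
  simpa using this

open NormedSpace in
lemma aux_exp_deriv' {E : Type*} [NormedAddCommGroup E] [NormedSpace ℝ E] [CompleteSpace E]
    (D : E →L[ℝ] E) (a : E) (t : ℝ) :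
    HasDerivAt (fun t : ℝ => (exp (t • D)) a) (D ((exp (t • D)) a)) t := by
  have h := hasDerivAt_exp_smul_const' (𝕂 := ℝ) D t
  have := h.clm_apply (hasDerivAt_const t a)
  simpa using this

open NormedSpace in
/-- The exponential of a derivation is an automorphism. -/
lemma aux_exp_hom {E : Type*} [NormedAddCommGroup E] [NormedSpace ℝ E] [FiniteDimensional ℝ E]
    [CompleteSpace E]
    (B : E →ₗ[ℝ] E →ₗ[ℝ] E) (D : E →L[ℝ] E)
    (hD : ∀ a b, D (B a b) = B (D a) b + B a (D b)) (t : ℝ) (a b : E) :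
    exp (t • D) (B a b) = B (exp (t • D) a) (exp (t • D) b) := by
  let Bc : E →L[ℝ] E →L[ℝ] E :=
    LinearMap.toContinuousLinearMap (LinearMap.toContinuousLinearMap.toLinearMap ∘ₗ B)
  have hBc : ∀ x y, Bc x y = B x y := fun x y => rfl
  have hinv : ∀ t : ℝ, exp (t • D) * exp (t • (-D)) = 1 := by
    intro t
    let : NormedAlgebra ℚ (E →L[ℝ] E) := NormedAlgebra.restrictScalars ℚ ℝ _
    rw [← exp_add_of_commute, smul_neg, add_neg_cancel, exp_zero]
    exact ((Commute.refl D).neg_right.smul_left t).smul_right t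
  have key : ∀ s : ℝ, HasDerivAt
      (fun s : ℝ => exp (s • (-D)) (Bc (exp (s • D) a) (exp (s • D) b))) 0 s := by
    intro s
    have h1 := hasDerivAt_exp_smul_const (𝕂 := ℝ) (-D) s
    have h2 : HasDerivAt (fun s : ℝ => Bc (exp (s • D) a)) (Bc (D (exp (s • D) a))) s :=
      Bc.hasFDerivAt.comp_hasDerivAt s (aux_exp_deriv' D a s)
    have h3 := h1.clm_apply (h2.clm_apply (aux_exp_deriv' D b s))
    convert h3 using 1
    simp only [mul_apply_eq_comp, neg_apply, hBc, hD]
    rw [← map_add, ← map_zero (exp (s • -D))]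
    congr 1
    simp
  have hc := is_const_of_deriv_eq_zero (fun s => (key s).differentiableAt)
    (fun s => (key s).deriv) t 0
  simp only [zero_smul, exp_zero, one_apply_eq_self, hBc] at hc
  rw [← hc, ← mul_apply_eq_comp, hinv, one_apply_eq_self]

open NormedSpace in
lemma aux_exp_norm {E : Type*} [NormedAddCommGroup E] [InnerProductSpace ℝ E] [CompleteSpace E]
    (D : E →L[ℝ] E)
    (hD : ∀ a b, inner ℝ (D a) b = - inner ℝ a (D b)) (t : ℝ) (a : E) :
    ‖exp (t • D) a‖ = ‖a‖ := by
  have key : ∀ s : ℝ, HasDerivAt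
      (fun s : ℝ => inner ℝ (exp (s • D) a) (exp (s • D) a)) 0 s := by
    intro s
    have h := (aux_exp_deriv' D a s).inner ℝ (aux_exp_deriv' D a s)
    rwa [hD, add_neg_cancel] at h
  have hc := is_const_of_deriv_eq_zero (fun s => (key s).differentiableAt)
    (fun s => (key s).deriv) t 0
  simp only [zero_smul, exp_zero, one_apply_eq_self, real_inner_self_eq_norm_sq] at hc
  exact (sq_eq_sq₀ (norm_nonneg _) (norm_nonneg _)).1 hc

/-- Second order necessary condition at a minimum. -/
lemma aux_second (f f' : ℝ → ℝ) (c : ℝ) (h1 : ∀ t, HasDerivAt f (f' t) t)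
    (h2 : HasDerivAt f' c 0) (hmin : ∀ t, f 0 ≤ f t) : f' 0 = 0 ∧ 0 ≤ c := by
  have hd : deriv f = f' := funext fun t => (h1 t).deriv
  have hloc : IsLocalMin f 0 := Filter.Eventually.of_forall hmin
  have h0 : f' 0 = 0 := by rw [← hd]; exact hloc.deriv_eq_zero
  refine ⟨h0, ?_⟩
  by_contra hc
  push Not at hc
  have hmax : IsLocalMax f 0 := isLocalMax_of_deriv_deriv_neg (by rw [hd, h2.deriv]; exact hc)
    (by rw [hd, h0]) (h1 0).continuousAt
  have hconst : f =ᶠ[nhds 0] fun _ => f 0 := hmax.mono fun t ht => le_antisymm ht (hmin t)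
  have h3 : f' =ᶠ[nhds 0] fun _ => 0 := by
    have := hconst.deriv
    rw [hd] at this
    simpa using this
  have h4 := h3.deriv_eq
  rw [h2.deriv] at h4
  simp at h4
  linarith

open NormedSpace in
/-- Metric version of the theorem. -/
lemma aux_core {E : Type*} [NormedAddCommGroup E] [InnerProductSpace ℝ E] [FiniteDimensional ℝ E]
    (B : E →ₗ[ℝ] E →ₗ[ℝ] E) (hskew : ∀ x y, B x y = - B y x)
    (hder : ∀ x a b, B x (B a b) = B (B x a) b + B a (B x b))
    (hinv : ∀ x a b, inner ℝ (B x a) b = - inner ℝ a (B x b))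
    (htr : ∀ x y, LinearMap.trace ℝ E (B x ∘ₗ B y) = - inner ℝ x y)
    (C : Submodule ℝ E) (hC : ∀ a ∈ C, ∀ b ∈ C, B a b = 0) (v : E) :
    ∃ f : E →ₗ[ℝ] E, (∀ a b, f (B a b) = B (f a) (f b)) ∧ (∀ a, ‖f a‖ = ‖a‖) ∧
      ∀ c ∈ C, inner ℝ (f v) c = 0 := by
  have : CompleteSpace E := FiniteDimensional.complete ℝ E
  have : ProperSpace (E →L[ℝ] E) := FiniteDimensional.proper ℝ _
  let S : Set (E →L[ℝ] E) := {f | (∀ a b, f (B a b) = B (f a) (f b)) ∧ ∀ a, ‖f a‖ = ‖a‖}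
  have hBc : Continuous fun p : E × E => B p.1 p.2 := by
    let Bc : E →L[ℝ] E →L[ℝ] E :=
      LinearMap.toContinuousLinearMap (LinearMap.toContinuousLinearMap.toLinearMap ∘ₗ B)
    exact Bc.continuous₂
  have hev : ∀ a : E, Continuous fun f : E →L[ℝ] E => f a := fun a =>
    (ContinuousLinearMap.apply ℝ E a).continuous
  have hSclosed : IsClosed S := by
    have : S = (⋂ a, ⋂ b, {f : E →L[ℝ] E | f (B a b) = B (f a) (f b)}) ∩
        ⋂ a, {f : E →L[ℝ] E | ‖f a‖ = ‖a‖} := by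
      ext f; simp [S]
    rw [this]
    refine IsClosed.inter (isClosed_iInter fun a => isClosed_iInter fun b => ?_)
      (isClosed_iInter fun a => ?_)
    · exact isClosed_eq (hev _) (hBc.comp ((hev a).prodMk (hev b)))
    · exact isClosed_eq (hev a).norm continuous_const
  have hScomp : IsCompact S := by
    refine (isCompact_closedBall (0 : E →L[ℝ] E) 1).of_isClosed_subset hSclosed ?_
    intro f hf
    rw [mem_closedBall_zero_iff]
    exact f.opNorm_le_bound zero_le_one fun a => by rw [hf.2 a, one_mul]
  have hSne : S.Nonempty := ⟨1, by simp [S]⟩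
  let P : E →L[ℝ] E := C.starProjection
  have hPsymm : ∀ x y, inner ℝ (P x) y = inner ℝ x (P y) := fun x y =>
    C.inner_starProjection_left_eq_right x y
  have hPid : ∀ x ∈ C, P x = x := fun x hx => Submodule.starProjection_eq_self_iff.2 hx
  have hPmem : ∀ x, P x ∈ C := fun x => Submodule.starProjection_apply_mem C x
  obtain ⟨f, hfS, hfmin⟩ := hScomp.exists_isMinOn (f := fun f => inner ℝ (P (f v)) (P (f v))) hSne
    (((P.continuous.comp (hev v)).inner (P.continuous.comp (hev v))).continuousOn)
  refine ⟨f, hfS.1, hfS.2, ?_⟩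
  set w := f v with hw
  set h := P w with hh
  have hhC : h ∈ C := hPmem w
  have hsecond : ∀ y : E, inner ℝ h (B y w) = 0 ∧
      0 ≤ inner ℝ (P (B y w)) (P (B y w)) + inner ℝ h (B y (B y w)) := by
    intro y
    let D : E →L[ℝ] E := LinearMap.toContinuousLinearMap (B y)
    have hDapp : ∀ a, D a = B y a := fun a => rfl
    have hPd : ∀ a t, HasDerivAt (fun t : ℝ => P (exp (t • D) a)) (P (exp (t • D) (D a))) t :=
      fun a t => P.hasFDerivAt.comp_hasDerivAt t (aux_exp_deriv D a t)
    have h1 := fun t => (hPd w t).inner ℝ (hPd w t)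
    have h2 := ((hPd w 0).inner ℝ (hPd (D w) 0)).add ((hPd (D w) 0).inner ℝ (hPd w 0))
    have hm := aux_second _ _ _ h1 h2 (by
      intro t
      have hmem : (exp (t • D)) * f ∈ S := by
        refine ⟨fun a b => ?_, fun a => ?_⟩
        · simp only [mul_apply_eq_comp, hfS.1]
          exact aux_exp_hom B D (hder y) t _ _
        · simp only [mul_apply_eq_comp]
          rw [aux_exp_norm D (hinv y), hfS.2]
      simpa using hfmin hmem)
    simp only [zero_smul, exp_zero, one_apply_eq_self, hDapp] at hm
    have e1 : ∀ z, inner ℝ (P w) (P z) = inner ℝ h z := fun z => by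
      rw [← hPsymm, hPid _ (hPmem w)]
    have e2 : ∀ z, inner ℝ (P z) (P w) = inner ℝ h z := fun z => by
      rw [real_inner_comm, e1]
    simp only [e1, e2] at hm
    constructor <;> linarith [hm.1, hm.2]
  have hwh : B w h = 0 := by
    refine ext_inner_right ℝ fun y => ?_
    rw [hinv, hskew w y, inner_neg_right, (hsecond y).1]; simp
  have hhw : B h w = 0 := by rw [hskew, hwh, neg_zero]
  have hcomm : ∀ z, B h (B w z) = B w (B h z) := fun z => by rw [hder, hhw]; simp
  let Z : Submodule ℝ E := LinearMap.ker (B h)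
  have hperp : ∀ y ∈ Zᗮ, 0 ≤ inner ℝ (B w (B h y)) y := by
    intro y hy
    have hP0 : P (B y w) = 0 := by
      rw [← inner_self_eq_zero (𝕜 := ℝ), ← hPsymm, hPid _ (hPmem _), hskew y w, inner_neg_right,
        ← hinv]
      refine (Submodule.mem_orthogonal _ _).1 hy _ ?_
      rw [LinearMap.mem_ker, hcomm, hC _ hhC _ (hPmem _), map_zero]
    have := (hsecond y).2
    rw [hP0, inner_zero_left, zero_add] at this
    have e : inner ℝ h (B y (B y w)) = inner ℝ (B w (B h y)) y := by
      rw [hinv w, ← neg_eq_iff_eq_neg.2 (hinv y h (B y w)), hskew y h, hskew y w]; simp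
    rwa [← e]
  have hall : ∀ y, 0 ≤ inner ℝ y (B w (B h y)) := by
    intro y
    obtain ⟨z, hz, y', hy', rfl⟩ := Z.exists_add_mem_mem_orthogonal y
    have hz0 : B h z = 0 := hz
    rw [real_inner_comm, map_add, hz0, zero_add, inner_add_right, hinv w, hinv h, hcomm, hz0]
    simpa using hperp y' hy'
  have htrace : 0 ≤ LinearMap.trace ℝ E (B w ∘ₗ B h) := by
    rw [LinearMap.trace_eq_sum_inner _ (stdOrthonormalBasis ℝ E)]
    exact Finset.sum_nonneg fun i _ => hall _
  have hwhn : inner ℝ w h = inner ℝ h h := by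
    conv_rhs => rw [hh, hPsymm, hPid _ (hPmem w)]
  rw [htr, hwhn] at htrace
  have hh0 : h = 0 := by
    rw [← inner_self_eq_zero (𝕜 := ℝ)]
    exact le_antisymm (by linarith) real_inner_self_nonneg
  intro c hc
  change inner ℝ w c = 0
  rw [← hPid c hc, ← hPsymm, ← hh, hh0, inner_zero_left]

/-- Every element can be moved into the orthogonal complement of `C` by an automorphism. -/
lemma aux_move (L : Type*) [LieRing L] [LieAlgebra ℝ L]
    [FiniteDimensional ℝ L]
    (hneg : ∀ x : L, x ≠ 0 → killingForm ℝ L x x < 0)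
    (C : LieSubalgebra ℝ L) (hC : C.IsCartanSubalgebra) (v : L) :
    ∃ g : L ≃ₗ⁅ℝ⁆ L, ∀ c ∈ C, killingForm ℝ L (g v) c = 0 := by
  have hK : LieAlgebra.IsKilling ℝ L := by
    refine ⟨?_⟩
    rw [eq_bot_iff]
    intro x hx
    by_contra hx0
    have := hneg x (by simpa using hx0)
    rw [LieIdeal.mem_killingCompl] at hx
    have := hx x (by simp)
    linarith
  have hab : ∀ a ∈ C, ∀ b ∈ C, ⁅a, b⁆ = 0 := by
    intro a ha b hb
    have := trivial_lie_zero C C ⟨a, ha⟩ ⟨b, hb⟩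
    simpa using congrArg Subtype.val this
  have hsymm : ∀ x y : L, killingForm ℝ L x y = killingForm ℝ L y x := fun x y =>
    LieModule.traceForm_comm ℝ L L x y
  have hinvk : ∀ x a b : L, killingForm ℝ L ⁅x, a⁆ b = - killingForm ℝ L a ⁅x, b⁆ := by
    intro x a b
    rw [← lie_skew, map_neg, LinearMap.neg_apply]
    exact congrArg _ (LieModule.traceForm_apply_lie_apply ℝ L L a x b)
  let core : InnerProductSpace.Core ℝ L :=
    { inner := fun x y => - killingForm ℝ L x y
      conj_inner_symm := fun x y => by simp [hsymm x y]
      re_inner_nonneg := fun x => by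
        by_cases hx : x = 0
        · simp [hx]
        · have := hneg x hx
          simp only [RCLike.re_to_real]; linarith
      add_left := fun x y z => by simp; ring
      smul_left := fun x y r => by simp
      definite := fun x hx => by
        by_contra hx0
        have := hneg x hx0
        linarith }
  let adL : L →ₗ[ℝ] L →ₗ[ℝ] L := LinearMap.mk₂ ℝ (fun x y => ⁅x, y⁆)
    add_lie smul_lie lie_add (fun c x y => lie_smul c x y)
  let : NormedAddCommGroup L := core.toNormedAddCommGroup
  let : InnerProductSpace ℝ L := InnerProductSpace.ofCore core.toCore
  have hin : ∀ x y : L, inner ℝ x y = - killingForm ℝ L x y := fun x y => rfl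
  obtain ⟨f, hf1, hf2, hf3⟩ := aux_core (E := L) adL
    (fun x y => (lie_skew x y).symm) (fun x a b => leibniz_lie x a b)
    (fun x a b => by rw [hin, hin]; exact congrArg _ (hinvk x a b))
    (fun x y => by rw [hin, neg_neg]; rfl) C.toSubmodule hab v
  have hinj : Function.Injective f := by
    refine (injective_iff_map_eq_zero f).2 fun a ha => ?_
    rw [← norm_eq_zero, ← hf2, ha, norm_zero]
  let F : L →ₗ⁅ℝ⁆ L := { f with map_lie' := fun {a b} => hf1 a b }
  refine ⟨LieEquiv.ofBijective F ⟨hinj, LinearMap.injective_iff_surjective.1 hinj⟩, fun c hc => ?_⟩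
  have := hf3 c hc
  rw [hin, neg_eq_zero] at this
  exact this

/-- If `V ⊆ L` is stable under all Lie algebra automorphisms of a compact semisimple real Lie
algebra `L`, and `C` is a Cartan subalgebra, then `V` is the union of the automorphism images
of `V ∩ C⊥`. -/
theorem stable_set_eq_union_of_images (L : Type*) [LieRing L] [LieAlgebra ℝ L]
    [FiniteDimensional ℝ L]
    (hneg : ∀ x : L, x ≠ 0 → killingForm ℝ L x x < 0)
    (C : LieSubalgebra ℝ L) (hC : C.IsCartanSubalgebra)
    (V : Set L) (hV : ∀ g : L ≃ₗ⁅ℝ⁆ L, ∀ v ∈ V, g v ∈ V) :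
    V = ⋃ g : L ≃ₗ⁅ℝ⁆ L,
      (fun x => g x) '' (V ∩ {x : L | ∀ c ∈ C, killingForm ℝ L x c = 0}) := by
  apply Set.Subset.antisymm
  · intro v hv
    obtain ⟨g, hg⟩ := aux_move L hneg C hC v
    exact Set.mem_iUnion.2 ⟨g.symm, g v, ⟨hV g v hv, hg⟩, g.symm_apply_apply v⟩
  · intro x hx
    obtain ⟨g, w, hw, rfl⟩ := Set.mem_iUnion.1 hx
    exact hV g w hw.1
end
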